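/- There exists a constant C_p > 0 depending only on p such that, whenever N_n ≤ 1, for all t1, t2 ≥ 0 with t1 ≤ 1, t2 ≤ 1 and t1 + t2 ≤ 1, and all x ≤ 0, P( S_n ≤ x · √( t1·⟨S⟩_n + t2·[S]_n + (1 − t1 − t2) ) ) − Φ(x) ≥ −C_p · N_n^{1/(2p+1)}. -/

import Mathlib

open MeasureTheory Filter Finset

/-- The standard normal distribution function
`Φ(x) = (2π)^{-1/2} ∫_{-∞}^x e^{-u²/2} du`. -/
noncomputable def stdNormalCDF (x : ℝ) : ℝ :=
  ∫ u in Set.Iic x, (Real.sqrt (2 * Real.pi))⁻¹ * Real.exp (-u ^ 2 / 2)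

/-- The standard normal density. -/
noncomputable def gphi (u : ℝ) : ℝ := (Real.sqrt (2 * Real.pi))⁻¹ * Real.exp (-u ^ 2 / 2)

lemma gphi_eq (u : ℝ) : gphi u = ProbabilityTheory.gaussianPDFReal 0 1 u := by
  simp [gphi, ProbabilityTheory.gaussianPDFReal]

lemma gphi_nonneg (u : ℝ) : 0 ≤ gphi u := by unfold gphi; positivity

lemma gphi_integrable : Integrable gphi := by
  have : gphi = ProbabilityTheory.gaussianPDFReal 0 1 := funext gphi_eq
  rw [this]; exact ProbabilityTheory.integrable_gaussianPDFReal 0 1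

lemma gphi_continuous : Continuous gphi := by unfold gphi; fun_prop

lemma sqrt_two_pi_inv_le : (Real.sqrt (2 * Real.pi))⁻¹ ≤ 1 := by
  apply inv_le_one_of_one_le₀
  rw [Real.one_le_sqrt]
  linarith [Real.pi_gt_three]

lemma gphi_le (u : ℝ) : gphi u ≤ 4096 / (1 + u ^ 2) ^ 4 := by
  have h1 : Real.exp (-u ^ 2 / 2) ≤ 4096 / (1 + u ^ 2) ^ 4 := by
    have h2 : (1 + u ^ 2) / 8 ≤ Real.exp (u ^ 2 / 8) := by
      have := Real.add_one_le_exp (u ^ 2 / 8)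
      linarith
    have h3 : ((1 + u ^ 2) / 8) ^ 4 ≤ Real.exp (u ^ 2 / 8) ^ 4 :=
      pow_le_pow_left₀ (by positivity) h2 4
    have h4 : Real.exp (u ^ 2 / 8) ^ 4 = Real.exp (u ^ 2 / 2) := by
      rw [← Real.exp_nat_mul]; congr 1; push_cast; ring
    rw [h4] at h3
    have h5 : Real.exp (-u ^ 2 / 2) = (Real.exp (u ^ 2 / 2))⁻¹ := by
      rw [← Real.exp_neg]; congr 1; ring
    rw [h5, le_div_iff₀ (by positivity), inv_mul_le_iff₀ (Real.exp_pos _)]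
    have : ((1 + u ^ 2) / 8) ^ 4 = (1 + u ^ 2) ^ 4 / 4096 := by ring
    rw [this] at h3
    linarith
  have h6 : 0 < Real.exp (-u ^ 2 / 2) := Real.exp_pos _
  unfold gphi
  nlinarith [sqrt_two_pi_inv_le]

lemma gphi_le_one (u : ℝ) : gphi u ≤ 1 := by
  unfold gphi
  have : Real.exp (-u ^ 2 / 2) ≤ 1 := by
    apply Real.exp_le_one_iff.2; nlinarith [sq_nonneg u]
  have h6 : 0 < Real.exp (-u ^ 2 / 2) := Real.exp_pos _
  nlinarith [sqrt_two_pi_inv_le]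

lemma abs_mul_gphi_le_one (u : ℝ) : |u * gphi u| ≤ 1 := by
  rw [abs_mul, abs_of_nonneg (gphi_nonneg u)]
  have h6 : 0 < Real.exp (-u ^ 2 / 2) := Real.exp_pos _
  have h1 : |u| * Real.exp (-u ^ 2 / 2) ≤ 1 := by
    have h5 : Real.exp (-u ^ 2 / 2) = (Real.exp (u ^ 2 / 2))⁻¹ := by
      rw [← Real.exp_neg]; congr 1; ring
    rw [h5, ← div_eq_mul_inv, div_le_one (Real.exp_pos _)]
    have := Real.add_one_le_exp (u ^ 2 / 2)
    nlinarith [sq_abs u, sq_nonneg (|u| - 1)]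
  unfold gphi
  have : |u| * ((√(2 * Real.pi))⁻¹ * Real.exp (-u ^ 2 / 2))
    = (√(2 * Real.pi))⁻¹ * (|u| * Real.exp (-u ^ 2 / 2)) := by ring
  rw [this]
  have h7 : 0 ≤ |u| * Real.exp (-u ^ 2 / 2) := by positivity
  nlinarith [sqrt_two_pi_inv_le]

lemma poly_gphi_le (u : ℝ) : (1 + |u|) ^ 3 * gphi u ≤ 100000 / (1 + u ^ 2) := by
  have h := gphi_le u
  have h0 := gphi_nonneg u
  have h1 : (1 + |u|) ^ 2 ≤ 2 * (1 + u ^ 2) := by nlinarith [sq_abs u, sq_nonneg (|u| - 1)]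
  have ha := abs_nonneg u
  have h2 : (1 + |u|) ^ 3 ≤ 8 * (1 + u ^ 2) ^ 3 := by
    have h3 : (1 + |u|) ^ 3 ≤ ((1 + |u|) ^ 2) ^ 3 := by
      rw [← pow_mul]; exact pow_le_pow_right₀ (by linarith) (by norm_num)
    have h4 : ((1 + |u|) ^ 2) ^ 3 ≤ (2 * (1 + u ^ 2)) ^ 3 := pow_le_pow_left₀ (by positivity) h1 3
    have h5 : (2 * (1 + u ^ 2)) ^ 3 = 8 * (1 + u ^ 2) ^ 3 := by ring
    linarith
  calc (1 + |u|) ^ 3 * gphi u ≤ (8 * (1 + u ^ 2) ^ 3) * (4096 / (1 + u ^ 2) ^ 4) := by gcongr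
    _ = 32768 / (1 + u ^ 2) := by field_simp; norm_num
    _ ≤ 100000 / (1 + u ^ 2) := by gcongr; norm_num

lemma cdf_sub (a b : ℝ) : stdNormalCDF b - stdNormalCDF a = ∫ u in a..b, gphi u := by
  have := intervalIntegral.integral_Iic_sub_Iic (f := gphi) (μ := volume) (a := a) (b := b)
    gphi_integrable.integrableOn gphi_integrable.integrableOn
  simpa [stdNormalCDF, gphi] using this

lemma cdf_hasDerivAt (x : ℝ) : HasDerivAt stdNormalCDF (gphi x) x := by
  have h : stdNormalCDF = fun x => stdNormalCDF 0 + ∫ u in (0:ℝ)..x, gphi u := by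
    ext x; rw [← cdf_sub]; ring
  rw [h]
  apply HasDerivAt.const_add
  exact intervalIntegral.integral_hasDerivAt_right
    (gphi_continuous.intervalIntegrable _ _)
    (gphi_continuous.stronglyMeasurableAtFilter _ _) gphi_continuous.continuousAt

lemma gphi_hasDerivAt (x : ℝ) : HasDerivAt gphi (-(x * gphi x)) x := by
  unfold gphi
  have h1 : HasDerivAt (fun u : ℝ => -u ^ 2 / 2) (-x) x := by
    have h : HasDerivAt (fun u : ℝ => -u ^ 2 / 2) _ x := ((hasDerivAt_id x).pow 2).neg.div_const 2
    exact h.congr_deriv (by simp; ring)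
  have h2 := (h1.exp).const_mul (Real.sqrt (2 * Real.pi))⁻¹
  exact h2.congr_deriv (by ring)

lemma cdf_eq_real (x : ℝ) : stdNormalCDF x = (ProbabilityTheory.gaussianReal 0 1).real (Set.Iic x) := by
  rw [Measure.real, ProbabilityTheory.gaussianReal_apply_eq_integral 0 one_ne_zero]
  have : ∀ u, ProbabilityTheory.gaussianPDFReal 0 1 u = gphi u := fun u => (gphi_eq u).symm
  simp_rw [this]
  rw [ENNReal.toReal_ofReal]
  · rfl
  · exact integral_nonneg gphi_nonneg

lemma cdf_nonneg (x : ℝ) : 0 ≤ stdNormalCDF x := by rw [cdf_eq_real]; exact measureReal_nonneg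
lemma cdf_le_one (x : ℝ) : stdNormalCDF x ≤ 1 := by rw [cdf_eq_real]; exact measureReal_le_one
lemma cdf_mono : Monotone stdNormalCDF := by
  intro a b h
  rw [cdf_eq_real, cdf_eq_real]
  exact measureReal_mono (Set.Iic_subset_Iic.2 h)
lemma cdf_continuous : Continuous stdNormalCDF :=
  continuous_iff_continuousAt.2 fun x => (cdf_hasDerivAt x).continuousAt
lemma cdf_measurable : Measurable stdNormalCDF := cdf_continuous.measurable

lemma cdf_lip (a b : ℝ) : |stdNormalCDF b - stdNormalCDF a| ≤ |b - a| := by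
  have := convex_univ.norm_image_sub_le_of_norm_hasDerivWithin_le (f := stdNormalCDF) (f' := gphi)
    (s := Set.univ) (x := a) (y := b) (C := 1)
    (fun x _ => (cdf_hasDerivAt x).hasDerivWithinAt)
    (fun x _ => by rw [Real.norm_eq_abs, abs_of_nonneg (gphi_nonneg x)]; exact gphi_le_one x)
    (Set.mem_univ _) (Set.mem_univ _)
  simpa using this

lemma cdf_scale (y c : ℝ) (hc : 1 ≤ c) : |stdNormalCDF (c * y) - stdNormalCDF y| ≤ c - 1 := by
  have := (convex_Icc 1 c).norm_image_sub_le_of_norm_hasDerivWithin_le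
    (f := fun t => stdNormalCDF (t * y)) (f' := fun t => gphi (t * y) * y)
    (x := 1) (y := c) (C := 1)
    (fun t _ => by
      have h : HasDerivAt (stdNormalCDF ∘ fun t => t * y) _ t :=
        HasDerivAt.comp t (cdf_hasDerivAt (t * y)) (hasDerivAt_mul_const y)
      exact h.hasDerivWithinAt)
    (fun t ht => by
      rw [Real.norm_eq_abs]
      have h1 := abs_mul_gphi_le_one (t * y)
      rw [abs_mul, abs_mul, abs_of_nonneg (gphi_nonneg _), abs_of_nonneg (by linarith [ht.1] : 0 ≤ t)] at h1
      rw [abs_mul, abs_of_nonneg (gphi_nonneg _)]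
      have h2 : 0 ≤ |y| * gphi (t * y) := mul_nonneg (abs_nonneg _) (gphi_nonneg _)
      nlinarith [ht.1])
    ⟨le_rfl, hc⟩ ⟨hc, le_rfl⟩
  simpa [abs_of_nonneg (sub_nonneg.2 hc)] using this

lemma taylor_two {f f' f'' : ℝ → ℝ} {a b M : ℝ}
    (h1 : ∀ x ∈ Set.uIcc a b, HasDerivAt f (f' x) x)
    (h2 : ∀ x ∈ Set.uIcc a b, HasDerivAt f' (f'' x) x)
    (h3 : ∀ x ∈ Set.uIcc a b, |f'' x| ≤ M) :
    |f b - f a - f' a * (b - a)| ≤ M * |b - a| ^ 2 := by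
  have hM : 0 ≤ M := (abs_nonneg _).trans (h3 a Set.left_mem_uIcc)
  have key : ∀ x ∈ Set.uIcc a b, ‖f' x - f' a‖ ≤ M * |b - a| := by
    intro x hx
    have := (convex_uIcc a b).norm_image_sub_le_of_norm_hasDerivWithin_le (f := f') (f' := f'')
      (fun x hx => (h2 x hx).hasDerivWithinAt) (fun x hx => h3 x hx) Set.left_mem_uIcc hx
    refine this.trans ?_
    rw [Real.norm_eq_abs]
    exact mul_le_mul_of_nonneg_left (Set.abs_sub_left_of_mem_uIcc hx) hM
  have := (convex_uIcc a b).norm_image_sub_le_of_norm_hasDerivWithin_le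
    (f := fun x => f x - f' a * x) (f' := fun x => f' x - f' a)
    (fun x hx => by
      have h : HasDerivAt (fun x => f x - f' a * x) _ x :=
        (h1 x hx).sub ((hasDerivAt_id x).const_mul (f' a))
      exact (h.congr_deriv (by simp)).hasDerivWithinAt) key Set.left_mem_uIcc Set.right_mem_uIcc
  rw [Real.norm_eq_abs, Real.norm_eq_abs] at this
  calc _ = |f b - f' a * b - (f a - f' a * a)| := by congr 1; ring
    _ ≤ _ := this
    _ = _ := by ring

lemma taylor_three {f f' f'' f3 : ℝ → ℝ} {a b M : ℝ}
    (h1 : ∀ x ∈ Set.uIcc a b, HasDerivAt f (f' x) x)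
    (h2 : ∀ x ∈ Set.uIcc a b, HasDerivAt f' (f'' x) x)
    (h3 : ∀ x ∈ Set.uIcc a b, HasDerivAt f'' (f3 x) x)
    (h4 : ∀ x ∈ Set.uIcc a b, |f3 x| ≤ M) :
    |f b - f a - f' a * (b - a) - f'' a / 2 * (b - a) ^ 2| ≤ M * |b - a| ^ 3 := by
  have hM : 0 ≤ M := (abs_nonneg _).trans (h4 a Set.left_mem_uIcc)
  have key : ∀ x ∈ Set.uIcc a b, |f'' x - f'' a| ≤ M * |b - a| := by
    intro x hx
    have := (convex_uIcc a b).norm_image_sub_le_of_norm_hasDerivWithin_le (f := f'') (f' := f3)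
      (fun x hx => (h3 x hx).hasDerivWithinAt) (fun x hx => h4 x hx) Set.left_mem_uIcc hx
    refine (Real.norm_eq_abs _ ▸ this).trans ?_
    rw [Real.norm_eq_abs]
    exact mul_le_mul_of_nonneg_left (Set.abs_sub_left_of_mem_uIcc hx) hM
  have := taylor_two (f := fun x => f x - f'' a / 2 * (x - a) ^ 2)
    (f' := fun x => f' x - f'' a * (x - a)) (f'' := fun x => f'' x - f'' a) (a := a) (b := b)
    (fun x hx => by
      have h : HasDerivAt (fun x => f x - f'' a / 2 * (x - a) ^ 2) _ x :=
        (h1 x hx).sub ((((hasDerivAt_id x).sub_const a).pow 2).const_mul (f'' a / 2))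
      exact h.congr_deriv (by simp; ring))
    (fun x hx => by
      have h : HasDerivAt (fun x => f' x - f'' a * (x - a)) _ x :=
        (h2 x hx).sub (((hasDerivAt_id x).sub_const a).const_mul (f'' a))
      exact h.congr_deriv (by simp)) key
  simp only [sub_self, mul_zero, sub_zero, ne_eq, OfNat.ofNat_ne_zero, not_false_eq_true, zero_pow] at this
  calc _ = |f b - f'' a / 2 * (b - a) ^ 2 - f a - f' a * (b - a)| := by congr 1; ring
    _ ≤ _ := this
    _ = _ := by ring


lemma psi_time_cmp (u t : ℝ) (h0 : 0 ≤ t) (h1 : t ≤ 1) :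
    (1 + |u / √(1 + t)|) ^ 3 * gphi (u / √(1 + t)) ≤ 200000 / (1 + u ^ 2) := by
  refine (poly_gphi_le _).trans ?_
  rw [div_pow, Real.sq_sqrt (by linarith), div_le_div_iff₀ (by positivity) (by positivity)]
  have : u ^ 2 / 2 ≤ u ^ 2 / (1 + t) := by
    apply div_le_div_of_nonneg_left <;> nlinarith [sq_nonneg u]
  nlinarith

lemma m_hasDerivAt (u t : ℝ) (h0 : 0 ≤ t) :
    HasDerivAt (fun t => u / √(1 + t)) (-(u / √(1 + t)) / (2 * (1 + t))) t := by
  have h1 : HasDerivAt (fun t : ℝ => 1 + t) 1 t := by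
    simpa using (hasDerivAt_id t).const_add 1
  have h2 := h1.sqrt (by positivity)
  have hs : √(1 + t) ≠ 0 := by positivity
  have h3 := (hasDerivAt_const t u).div h2 hs
  refine h3.congr_deriv ?_
  have : √(1 + t) ^ 2 = 1 + t := Real.sq_sqrt (by positivity)
  rw [this]
  field_simp
  ring

lemma f_hasDerivAt (u t : ℝ) (h0 : 0 ≤ t) :
    HasDerivAt (fun t => stdNormalCDF (u / √(1 + t)))
      (-(gphi (u / √(1 + t)) * (u / √(1 + t)) / (2 * (1 + t)))) t := by
  have h : HasDerivAt (stdNormalCDF ∘ fun t => u / √(1 + t)) _ t :=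
    HasDerivAt.comp t (cdf_hasDerivAt _) (m_hasDerivAt u t h0)
  exact h.congr_deriv (by ring)

lemma f'_hasDerivAt (u t : ℝ) (h0 : 0 ≤ t) :
    HasDerivAt (fun t => -(gphi (u / √(1 + t)) * (u / √(1 + t)) / (2 * (1 + t))))
      (gphi (u / √(1 + t)) / (1 + t) ^ 2 * ((u / √(1 + t)) * (1 - (u / √(1 + t)) ^ 2) / 4
        + (u / √(1 + t)) / 2)) t := by
  have hm := m_hasDerivAt u t h0
  have h1 : HasDerivAt (fun t : ℝ => 2 * (1 + t)) 2 t := by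
    simpa using ((hasDerivAt_id t).const_add 1).const_mul 2
  have hg : HasDerivAt (gphi ∘ fun t => u / √(1 + t)) _ t :=
    HasDerivAt.comp t (gphi_hasDerivAt _) hm
  have h := ((hg.mul hm).div h1 (by positivity)).neg
  refine HasDerivAt.congr_deriv h ?_
  simp only [Function.comp, Pi.mul_apply]
  set m := u / √(1 + t)
  have : (1 + t) ≠ 0 := by positivity
  field_simp
  ring

lemma time_taylor (u τ : ℝ) (h0 : 0 ≤ τ) (h1 : τ ≤ 1) :
    |stdNormalCDF (u / √(1 + τ)) - stdNormalCDF u + u * gphi u / 2 * τ| ≤ 200000 / (1 + u ^ 2) * τ ^ 2 := by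
  have h := taylor_two (a := 0) (b := τ) (M := 200000 / (1 + u ^ 2))
    (f := fun t => stdNormalCDF (u / √(1 + t)))
    (fun t ht => f_hasDerivAt u t (by rw [Set.uIcc_of_le h0] at ht; exact ht.1))
    (fun t ht => f'_hasDerivAt u t (by rw [Set.uIcc_of_le h0] at ht; exact ht.1))
    (fun t ht => by
      rw [Set.uIcc_of_le h0] at ht
      refine le_trans ?_ (psi_time_cmp u t ht.1 (ht.2.trans h1))
      set m := u / √(1 + t)
      rw [abs_mul, abs_of_nonneg (div_nonneg (gphi_nonneg m) (by positivity)), mul_comm]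
      have hd : gphi m / (1 + t) ^ 2 ≤ gphi m := div_le_self (gphi_nonneg m) (by nlinarith [ht.1])
      have hb : |m * (1 - m ^ 2) / 4 + m / 2| ≤ (1 + |m|) ^ 3 := by
        have : m * (1 - m ^ 2) / 4 + m / 2 = m * (3 - m ^ 2) / 4 := by ring
        rw [this, abs_div, abs_mul]
        have h3 : |3 - m ^ 2| ≤ 3 + |m| ^ 2 := by
          rw [sq_abs, abs_le]; constructor <;> nlinarith [sq_nonneg m]
        have ha := abs_nonneg m
        rw [abs_of_pos (by norm_num : (0:ℝ) < 4), div_le_iff₀ (by norm_num)]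
        nlinarith [mul_le_mul_of_nonneg_left h3 ha, pow_nonneg ha 3, pow_nonneg ha 2]
      exact mul_le_mul hb hd (div_nonneg (gphi_nonneg m) (by positivity)) (by positivity))
  simp only [add_zero, Real.sqrt_one, div_one, sub_zero, mul_one, abs_of_nonneg h0] at h
  refine le_trans (le_of_eq ?_) h
  congr 1; ring

lemma time_lip (u τ : ℝ) (h0 : 0 ≤ τ) (h1 : τ ≤ 1) :
    |stdNormalCDF (u / √(1 + τ)) - stdNormalCDF u| ≤ 200000 / (1 + u ^ 2) * τ := by
  have h := (convex_Icc 0 τ).norm_image_sub_le_of_norm_hasDerivWithin_le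
    (f := fun t => stdNormalCDF (u / √(1 + t))) (C := 200000 / (1 + u ^ 2))
    (fun t ht => (f_hasDerivAt u t ht.1).hasDerivWithinAt)
    (fun t ht => by
      refine le_trans ?_ (psi_time_cmp u t ht.1 (ht.2.trans h1))
      set m := u / √(1 + t)
      have hg := gphi_nonneg m
      have ha := abs_nonneg m
      rw [Real.norm_eq_abs, abs_neg, abs_div, abs_mul, abs_of_nonneg (gphi_nonneg m)]
      refine (div_le_self (by positivity) ?_).trans ?_
      · rw [abs_of_nonneg (by linarith [ht.1])]; linarith [ht.1]
      · rw [mul_comm]; gcongr; nlinarith [pow_nonneg ha 3, pow_nonneg ha 2])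
    ⟨le_rfl, h0⟩ ⟨h0, le_rfl⟩
  simpa [abs_of_nonneg h0] using h

lemma space_taylor (u ξ : ℝ) (h1 : |ξ| ≤ 1) :
    |stdNormalCDF (u + ξ) - stdNormalCDF u - gphi u * ξ + u * gphi u / 2 * ξ ^ 2|
      ≤ 300000 / (1 + u ^ 2) * |ξ| ^ 3 := by
  have h := taylor_three (a := u) (b := u + ξ) (M := 300000 / (1 + u ^ 2))
    (f := stdNormalCDF) (f' := gphi) (f'' := fun x => -(x * gphi x))
    (f3 := fun x => (x ^ 2 - 1) * gphi x)
    (fun t _ => cdf_hasDerivAt t)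
    (fun t _ => gphi_hasDerivAt t)
    (fun t _ => by
      have h : HasDerivAt (fun x => -(x * gphi x)) _ t := ((hasDerivAt_id t).mul (gphi_hasDerivAt t)).neg
      exact h.congr_deriv (by simp; ring))
    (fun t ht => by
      have h2 := Set.abs_sub_left_of_mem_uIcc ht
      rw [add_sub_cancel_left] at h2
      have h3 : |t - u| ≤ 1 := h2.trans h1
      have h4 : 1 + u ^ 2 ≤ 3 * (1 + t ^ 2) := by
        have := abs_le.1 h3
        nlinarith [sq_nonneg (2 * t - u), sq_nonneg (t - u)]
      calc |(t ^ 2 - 1) * gphi t| = |t ^ 2 - 1| * gphi t := by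
            rw [abs_mul, abs_of_nonneg (gphi_nonneg t)]
        _ ≤ (1 + |t|) ^ 3 * gphi t := by
            have ha := abs_nonneg t
            apply mul_le_mul_of_nonneg_right _ (gphi_nonneg t)
            have : |t ^ 2 - 1| ≤ |t| ^ 2 + 1 := by
              rw [sq_abs, abs_le]; constructor <;> nlinarith [sq_nonneg t]
            nlinarith [pow_nonneg ha 3, pow_nonneg ha 2]
        _ ≤ 100000 / (1 + t ^ 2) := poly_gphi_le t
        _ ≤ 300000 / (1 + u ^ 2) := by
            rw [div_le_div_iff₀ (by positivity) (by positivity)]; linarith)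
  rw [add_sub_cancel_left] at h
  refine le_trans (le_of_eq ?_) h
  congr 1; ring

lemma space_big (u ξ : ℝ) (h1 : 1 ≤ |ξ|) :
    |stdNormalCDF (u + ξ) - stdNormalCDF u - gphi u * ξ + u * gphi u / 2 * ξ ^ 2| ≤ 3 * ξ ^ 2 := by
  have a1 : |stdNormalCDF (u + ξ) - stdNormalCDF u| ≤ 1 := by
    rw [abs_le]; constructor <;> linarith [cdf_nonneg u, cdf_nonneg (u + ξ), cdf_le_one u, cdf_le_one (u + ξ)]
  have a2 : |gphi u * ξ| ≤ |ξ| := by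
    rw [abs_mul, abs_of_nonneg (gphi_nonneg u)]
    nlinarith [gphi_le_one u, abs_nonneg ξ]
  have a3 : |u * gphi u / 2 * ξ ^ 2| ≤ ξ ^ 2 := by
    rw [abs_mul, abs_div, abs_of_nonneg (sq_nonneg ξ)]
    have := abs_mul_gphi_le_one u
    rw [abs_of_pos (by norm_num : (0:ℝ) < 2)]
    nlinarith [sq_nonneg ξ]
  have := sq_abs ξ
  calc _ ≤ |stdNormalCDF (u + ξ) - stdNormalCDF u| + |gphi u * ξ| + |u * gphi u / 2 * ξ ^ 2| :=
        (abs_add_le _ _).trans (by gcongr; exact abs_sub _ _)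
    _ ≤ _ := by nlinarith

lemma young_step (p η : ℝ) (hp : 1 < p) (hη : 0 < η) :
    ∃ C : ℝ, 1 ≤ C ∧ ∀ R m : ℝ, 1 ≤ R → 0 ≤ m → m ≤ R →
      m ^ 3 / R ^ 3 ≤ η * m ^ 2 * R ^ (-(3 + 1 / p)) + C * m ^ (2 * p) := by
  refine ⟨max 1 (η ^ (3 - 2 * p)), le_max_left _ _, ?_⟩
  intro R m hR hm hmR
  have hR0 : 0 < R := by linarith
  have e1 : R ^ (-(3 + 1 / p)) = R ^ (-(1 / p)) / R ^ 3 := by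
    rw [← Real.rpow_natCast, ← Real.rpow_sub hR0]; congr 1; push_cast; ring
  have hp0 : 0 < p := by linarith
  by_cases hc : m ≤ η * R ^ (-(1 / p))
  · have : m ^ 3 / R ^ 3 ≤ η * m ^ 2 * R ^ (-(3 + 1 / p)) := by
      rw [e1, ← mul_div_assoc]
      gcongr
      nlinarith [sq_nonneg m]
    have h2 : 0 ≤ max 1 (η ^ (3 - 2 * p)) * m ^ (2 * p) := by positivity
    linarith
  · push Not at hc
    have hpos : 0 < η * R ^ (-(1 / p)) := by positivity
    have hm0 : 0 < m := hpos.trans hc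
    have h0 : 0 ≤ η * m ^ 2 * R ^ (-(3 + 1 / p)) := by positivity
    suffices m ^ 3 / R ^ 3 ≤ max 1 (η ^ (3 - 2 * p)) * m ^ (2 * p) by linarith
    rcases le_total (2 * p) 3 with h | h
    · have h1 : m ^ 3 / R ^ 3 ≤ (m / R) ^ (2 * p) := by
        rw [← div_pow, ← Real.rpow_natCast]
        apply Real.rpow_le_rpow_of_exponent_ge (by positivity) ((div_le_one hR0).2 hmR)
        simpa using h
      have h2 : (m / R) ^ (2 * p) ≤ m ^ (2 * p) := by
        apply Real.rpow_le_rpow (by positivity) (div_le_self hm hR) (by positivity)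
      have h3 : m ^ (2 * p) ≤ max 1 (η ^ (3 - 2 * p)) * m ^ (2 * p) :=
        le_mul_of_one_le_left (by positivity) (le_max_left _ _)
      linarith
    · have h1 : m ^ (3 - 2 * p) ≤ (η * R ^ (-(1 / p))) ^ (3 - 2 * p) :=
        Real.rpow_le_rpow_of_nonpos hpos hc.le (by linarith)
      have h2 : m ^ 3 = m ^ (2 * p) * m ^ (3 - 2 * p) := by
        rw [← Real.rpow_add hm0, ← Real.rpow_natCast]; congr 1; push_cast; ring
      have h3 : (η * R ^ (-(1 / p))) ^ (3 - 2 * p) ≤ η ^ (3 - 2 * p) * R ^ 3 := by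
        rw [Real.mul_rpow hη.le (by positivity), ← Real.rpow_mul hR0.le, ← Real.rpow_natCast R]
        gcongr
        · have : -(1 / p) * (3 - 2 * p) = 2 - 3 / p := by field_simp; ring
          rw [this]
          have : 0 < 3 / p := by positivity
          push_cast; linarith
      rw [h2, div_le_iff₀ (by positivity)]
      calc m ^ (2 * p) * m ^ (3 - 2 * p) ≤ m ^ (2 * p) * (η ^ (3 - 2 * p) * R ^ 3) := by
            gcongr; exact h1.trans h3
        _ ≤ m ^ (2 * p) * (max 1 (η ^ (3 - 2 * p)) * R ^ 3) := by
            gcongr; exact le_max_right _ _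
        _ = _ := by ring

/-- Deterministic one step estimate. -/
lemma one_step (p η : ℝ) (hp : 1 < p) (hη : 0 < η) :
    ∃ C : ℝ, 1 ≤ C ∧ ∀ r q X u : ℝ, 1 ≤ r → 0 ≤ q →
      |stdNormalCDF (u - X / √r) - stdNormalCDF (u / √(1 + q / r))
        - (if q ≤ 1 then 1 else 0) * (-(gphi u * X / √r) - u * gphi u / 2 * (X ^ 2 - q) / r)|
      ≤ η * ((if q ≤ 1 then 1 else 0) * (r ^ (-(3 + 1 / p) / 2) / (1 + u ^ 2)) * (X ^ 2 + q))
        + C * (|X| ^ (2 * p) + (min q 1) ^ p) := by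
  obtain ⟨C, hC1, hC⟩ := young_step p (η / 300000) hp (by positivity)
  refine ⟨300000 * C, by linarith, ?_⟩
  intro r q X u hr hq
  have hp0 : 0 < p := by linarith
  by_cases hq1 : q ≤ 1
  swap
  · have h1 : min q 1 = 1 := min_eq_right (by linarith)
    simp only [hq1, if_false, zero_mul, sub_zero, mul_zero, zero_add, h1, Real.one_rpow]
    have a1 : |stdNormalCDF (u - X / √r) - stdNormalCDF (u / √(1 + q / r))| ≤ 1 := by
      rw [abs_le]; constructor <;> linarith [cdf_nonneg (u - X / √r), cdf_nonneg (u / √(1 + q / r)),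
        cdf_le_one (u - X / √r), cdf_le_one (u / √(1 + q / r))]
    have : 0 ≤ |X| ^ (2 * p) := by positivity
    nlinarith
  have h1 : min q 1 = q := min_eq_left hq1
  simp only [hq1, if_true, one_mul, h1]
  have hr0 : 0 < r := by linarith
  set R := √r with hRdef
  have hR1 : 1 ≤ R := Real.one_le_sqrt.2 hr
  have hR0 : 0 < R := by linarith
  have hRr : R ^ 2 = r := Real.sq_sqrt hr0.le
  have hRp : R ^ (-(3 + 1 / p)) = r ^ (-(3 + 1 / p) / 2) := by
    rw [← hRr, ← Real.rpow_natCast, ← Real.rpow_mul hR0.le]; congr 1; push_cast; ring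
  set w := r ^ (-(3 + 1 / p) / 2) with hw
  have hw0 : 0 ≤ w := by positivity
  set ψ := 1 / (1 + u ^ 2) with hψ
  have hψ0 : 0 ≤ ψ := by positivity
  have hψ1 : ψ ≤ 1 := by
    rw [hψ, div_le_one (by positivity)]; nlinarith [sq_nonneg u]
  have hτ := time_taylor u (q / r) (by positivity) ((div_le_one hr0).2 (by linarith))
  have e2 : 200000 / (1 + u ^ 2) = 200000 * ψ := by rw [hψ]; ring
  have e3 : 300000 / (1 + u ^ 2) = 300000 * ψ := by rw [hψ]; ring
  rw [e2] at hτ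
  -- time error
  have ht : 200000 * ψ * (q / r) ^ 2 ≤ 300000 * ψ * (η / 300000 * q * w + C * q ^ p) := by
    have hs := hC R (√q) hR1 (Real.sqrt_nonneg q) ((Real.sqrt_le_one.2 hq1).trans hR1)
    have e4 : (√q) ^ 2 = q := Real.sq_sqrt hq
    have e5 : (√q) ^ (2 * p) = q ^ p := by
      rw [Real.rpow_mul (Real.sqrt_nonneg q)]; norm_num [e4]
    rw [hRp, e4, e5] at hs
    have e6 : (q / r) ^ 2 ≤ (√q) ^ 3 / R ^ 3 := by
      have e7 : q / r = (√q) ^ 2 / R ^ 2 := by rw [hRr, e4]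
      rw [e7]
      have : ((√q) ^ 2 / R ^ 2) ^ 2 = ((√q) ^ 3 / R ^ 3) * ((√q) / R) := by field_simp
      rw [this]
      apply mul_le_of_le_one_right (by positivity)
      rw [div_le_one hR0]
      exact (Real.sqrt_le_one.2 hq1).trans hR1
    have : (q / r) ^ 2 ≤ η / 300000 * q * w + C * q ^ p := e6.trans hs
    have h0 : 0 ≤ (q / r) ^ 2 := by positivity
    nlinarith [mul_le_mul_of_nonneg_left this hψ0, mul_nonneg hψ0 h0]
  -- space error
  have hs : |stdNormalCDF (u + -(X / R)) - stdNormalCDF u - gphi u * (-(X / R))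
      + u * gphi u / 2 * (-(X / R)) ^ 2| ≤ 300000 * ψ * (η / 300000 * X ^ 2 * w) + 300000 * C * |X| ^ (2 * p) := by
    have habs : |-(X / R)| = |X| / R := by rw [abs_neg, abs_div, abs_of_pos hR0]
    rcases le_total |X| R with h | h
    · have := space_taylor u (-(X / R)) (by rw [habs]; exact (div_le_one hR0).2 h)
      refine this.trans ?_
      rw [e3, habs, div_pow]
      have hy := hC R |X| hR1 (abs_nonneg X) h
      rw [hRp, sq_abs] at hy
      have hn : 0 ≤ C * |X| ^ (2 * p) := by positivity
      nlinarith [mul_le_mul_of_nonneg_left hy hψ0]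
    · have := space_big u (-(X / R)) (by rw [habs]; exact (one_le_div hR0).2 h)
      refine this.trans ?_
      have h2 : (-(X / R)) ^ 2 ≤ |X| ^ (2 * p) := by
        calc (-(X / R)) ^ 2 = X ^ 2 / R ^ 2 := by ring
          _ ≤ X ^ 2 := div_le_self (sq_nonneg X) (by nlinarith)
          _ = |X| ^ (2 : ℝ) := by rw [← sq_abs]; norm_cast
          _ ≤ |X| ^ (2 * p) := Real.rpow_le_rpow_of_exponent_le (hR1.trans h) (by linarith)
      have h3 : 0 ≤ |X| ^ (2 * p) := by positivity
      have h4 : 0 ≤ 300000 * ψ * (η / 300000 * X ^ 2 * w) := by positivity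
      nlinarith
  have hqp : 0 ≤ q ^ p := by positivity
  calc _ = |(stdNormalCDF (u + -(X / R)) - stdNormalCDF u - gphi u * (-(X / R))
      + u * gphi u / 2 * (-(X / R)) ^ 2) - (stdNormalCDF (u / √(1 + q / r)) - stdNormalCDF u + u * gphi u / 2 * (q / r))| := by
        congr 1; rw [neg_sq, div_pow, hRr, ← sub_eq_add_neg]; ring
    _ ≤ _ := abs_sub _ _
    _ ≤ (300000 * ψ * (η / 300000 * X ^ 2 * w) + 300000 * C * |X| ^ (2 * p))
        + 300000 * ψ * (η / 300000 * q * w + C * q ^ p) := add_le_add hs (hτ.trans ht)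
    _ ≤ (300000 * ψ * (η / 300000 * X ^ 2 * w) + 300000 * C * |X| ^ (2 * p))
        + (300000 * ψ * (η / 300000 * q * w) + 300000 * C * q ^ p) := by
        have : ψ * (C * q ^ p) ≤ C * q ^ p := mul_le_of_le_one_left (by positivity) hψ1
        nlinarith
    _ = _ := by rw [hψ]; ring


/-- Martingale differences `X i` (measurable for `ℱ (i+1)`) with conditional variances `q i`. -/
structure MDiff {Ω : Type} {mΩ : MeasurableSpace Ω} (μ : Measure Ω) (ℱ : Filtration ℕ mΩ) (p : ℝ)
    (X q : ℕ → Ω → ℝ) : Prop where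
  mX : ∀ i, Measurable[ℱ (i + 1)] (X i)
  mq : ∀ i, Measurable[ℱ i] (q i)
  q0 : ∀ i ω, 0 ≤ q i ω
  iX : ∀ i, Integrable (fun ω => |X i ω| ^ (2 * p)) μ
  iq : ∀ i, Integrable (q i) μ
  e1 : ∀ i (W : Ω → ℝ), Measurable[ℱ i] W → Integrable (fun ω => W ω * X i ω) μ →
    ∫ ω, W ω * X i ω ∂μ = 0
  e2 : ∀ i (W : Ω → ℝ), Measurable[ℱ i] W → (∃ c, ∀ ω, |W ω| ≤ c) →
    ∫ ω, W ω * X i ω ^ 2 ∂μ = ∫ ω, W ω * q i ω ∂μ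

lemma int_bdd_mul {Ω : Type} {mΩ : MeasurableSpace Ω} {μ : Measure Ω} {f W : Ω → ℝ}
    (hf : Integrable f μ) (hW : Measurable W) (hb : ∃ c, ∀ ω, |W ω| ≤ c) :
    Integrable (fun ω => W ω * f ω) μ := by
  obtain ⟨c, hc⟩ := hb
  exact hf.bdd_mul hW.aestronglyMeasurable (ae_of_all _ hc)

lemma int_bdd {Ω : Type} {mΩ : MeasurableSpace Ω} {μ : Measure Ω} [IsFiniteMeasure μ] {W : Ω → ℝ}
    (hW : Measurable W) (hb : ∃ c, ∀ ω, |W ω| ≤ c) :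
    Integrable W μ := by
  obtain ⟨c, hc⟩ := hb
  exact Integrable.of_bound hW.aestronglyMeasurable c (ae_of_all _ hc)

namespace MDiff
variable {Ω : Type} {mΩ : MeasurableSpace Ω} {μ : Measure Ω} [IsProbabilityMeasure μ]
  {ℱ : Filtration ℕ mΩ} {p : ℝ} {X q : ℕ → Ω → ℝ}

lemma mX' (h : MDiff μ ℱ p X q) (i : ℕ) : Measurable (X i) := (h.mX i).mono (ℱ.le _) le_rfl
lemma mq' (h : MDiff μ ℱ p X q) (i : ℕ) : Measurable (q i) := (h.mq i).mono (ℱ.le _) le_rfl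

lemma sq_le_rpow (hp : 1 < p) (x : ℝ) : x ^ 2 ≤ 1 + |x| ^ (2 * p) := by
  rcases le_total |x| 1 with h | h
  · have : 0 ≤ |x| ^ (2 * p) := by positivity
    have : x ^ 2 ≤ 1 := by rw [← sq_abs]; exact pow_le_one₀ (abs_nonneg x) h
    linarith
  · have : x ^ 2 ≤ |x| ^ (2 * p) := by
      rw [← sq_abs, ← Real.rpow_natCast]
      exact Real.rpow_le_rpow_of_exponent_le h (by push_cast; linarith)
    linarith

lemma iX2 (h : MDiff μ ℱ p X q) (hp : 1 < p) (i : ℕ) : Integrable (fun ω => X i ω ^ 2) μ := by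
  refine ((integrable_const (1:ℝ)).add (h.iX i)).mono' ((h.mX' i).pow_const 2).aestronglyMeasurable ?_
  refine ae_of_all _ fun ω => ?_
  rw [Real.norm_eq_abs, abs_of_nonneg (sq_nonneg _)]
  exact sq_le_rpow hp _

lemma iX1 (h : MDiff μ ℱ p X q) (hp : 1 < p) (i : ℕ) : Integrable (X i) μ := by
  refine ((integrable_const (1:ℝ)).add (h.iX2 hp i)).mono' (h.mX' i).aestronglyMeasurable ?_
  refine ae_of_all _ fun ω => ?_
  rw [Real.norm_eq_abs]
  change |X i ω| ≤ 1 + X i ω ^ 2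
  nlinarith [sq_abs (X i ω), sq_nonneg (|X i ω| - 1)]

lemma mS (h : MDiff μ ℱ p X q) (k : ℕ) : Measurable[ℱ k] (fun ω => ∑ i ∈ range k, X i ω) := by
  apply Finset.measurable_fun_sum
  intro i hi
  exact (h.mX i).mono (ℱ.mono (by simpa using hi)) le_rfl

lemma mC (h : MDiff μ ℱ p X q) (k : ℕ) : Measurable[ℱ k] (fun ω => ∑ i ∈ range (k + 1), q i ω) := by
  apply Finset.measurable_fun_sum
  intro i hi
  exact (h.mq i).mono (ℱ.mono (by simp at hi; omega)) le_rfl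

lemma mS' (h : MDiff μ ℱ p X q) (k : ℕ) : Measurable (fun ω => ∑ i ∈ range k, X i ω) :=
  (h.mS k).mono (ℱ.le _) le_rfl
lemma mC' (h : MDiff μ ℱ p X q) (k : ℕ) : Measurable (fun ω => ∑ i ∈ range k, q i ω) :=
  Finset.measurable_fun_sum _ fun i _ => h.mq' i

lemma min_q_le (h : MDiff μ ℱ p X q) (hp : 1 < p) (i : ℕ) :
    ∫ ω, (min (q i ω) 1) ^ p ∂μ ≤ ∫ ω, |X i ω| ^ (2 * p) ∂μ := by
  have hp0 : 0 < p := by linarith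
  have mW : Measurable[ℱ i] (fun ω => p * (min (q i ω) 1) ^ (p - 1)) := by
    have : Measurable (fun x : ℝ => p * (min x 1) ^ (p - 1)) := by fun_prop
    exact this.comp (h.mq i)
  have mc : Measurable (fun ω => (min (q i ω) 1) ^ p) := by
    have : Measurable (fun x : ℝ => (min x 1) ^ p) := by fun_prop
    exact this.comp (h.mq' i)
  have c0 : ∀ ω, 0 ≤ min (q i ω) 1 := fun ω => le_min (h.q0 i ω) zero_le_one
  have bW : ∃ c, ∀ ω, |p * (min (q i ω) 1) ^ (p - 1)| ≤ c := by
    refine ⟨p, fun ω => ?_⟩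
    rw [abs_of_nonneg (mul_nonneg hp0.le (Real.rpow_nonneg (c0 ω) _))]
    exact mul_le_of_le_one_right hp0.le (Real.rpow_le_one (c0 ω) (min_le_right _ _) (by linarith))
  have bc : ∃ c, ∀ ω, |(min (q i ω) 1) ^ p| ≤ c := by
    refine ⟨1, fun ω => ?_⟩
    rw [abs_of_nonneg (Real.rpow_nonneg (c0 ω) _)]
    exact Real.rpow_le_one (c0 ω) (min_le_right _ _) hp0.le
  have mW' := mW.mono (ℱ.le _) le_rfl
  have i1 := int_bdd_mul (h.iX2 hp i) mW' bW
  have i2 := int_bdd_mul (h.iq i) mW' bW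
  have i3 := int_bdd (μ := μ) mc bc
  have pt : ∀ ω, (min (q i ω) 1) ^ p + (p * (min (q i ω) 1) ^ (p - 1) * X i ω ^ 2
      - p * (min (q i ω) 1) ^ (p - 1) * q i ω) ≤ |X i ω| ^ (2 * p) := by
    intro ω
    set c := min (q i ω) 1 with hc
    have hc0 : 0 ≤ c := c0 ω
    have hcq : c ≤ q i ω := min_le_left _ _
    have e : |X i ω| ^ (2 * p) = (X i ω ^ 2) ^ p := by
      rw [Real.rpow_mul (abs_nonneg _)]; norm_num
    rw [e]
    set m := X i ω ^ 2 with hm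
    have hm0 : 0 ≤ m := sq_nonneg _
    have hcp : 0 ≤ p * c ^ (p - 1) := by positivity
    have : c ^ p + p * c ^ (p - 1) * (m - c) ≤ m ^ p := by
      rcases hc0.eq_or_lt with h0 | h0
      · rw [← h0, Real.zero_rpow (by linarith), Real.zero_rpow (by linarith)]
        simp; positivity
      · have hb := one_add_mul_self_le_rpow_one_add (s := m / c - 1)
          (by have : 0 ≤ m / c := by positivity
              linarith) hp.le
        have e2 : (1 + (m / c - 1)) ^ p = m ^ p / c ^ p := by
          rw [← Real.div_rpow hm0 hc0]; congr 1; ring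
        rw [e2, le_div_iff₀ (by positivity)] at hb
        have e3 : c ^ p = c ^ (p - 1) * c := by
          rw [Real.rpow_sub_one h0.ne']; field_simp
        refine le_trans (le_of_eq ?_) hb
        rw [e3]; field_simp
    nlinarith
  have := integral_mono (i3.add (i1.sub i2)) (h.iX i) pt
  have e : ∫ ω, ((fun ω => (min (q i ω) 1) ^ p) + ((fun ω => p * (min (q i ω) 1) ^ (p - 1) * X i ω ^ 2)
      - fun ω => p * (min (q i ω) 1) ^ (p - 1) * q i ω)) ω ∂μ = ∫ ω, (min (q i ω) 1) ^ p ∂μ := by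
    rw [integral_add' i3 (i1.sub i2), integral_sub' i1 i2, h.e2 i _ mW bW]; ring
  rw [e] at this
  exact this

lemma iS2 (h : MDiff μ ℱ p X q) (hp : 1 < p) (i m : ℕ) :
    Integrable (fun ω => (∑ j ∈ range (i + m), X j ω - ∑ j ∈ range i, X j ω) ^ 2) μ := by
  have hL : ∀ j, MemLp (X j) 2 μ := fun j =>
    (memLp_two_iff_integrable_sq (h.mX' j).aestronglyMeasurable).2 (h.iX2 hp j)
  have : ∀ k, MemLp (fun ω => ∑ j ∈ range k, X j ω) 2 μ := fun k => memLp_finsetSum _ fun j _ => hL j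
  exact ((this (i + m)).sub (this i)).integrable_sq

lemma orth (h : MDiff μ ℱ p X q) (hp : 1 < p) (i : ℕ) (W : Ω → ℝ) (mW : Measurable[ℱ i] W)
    (bW : ∃ c, ∀ ω, |W ω| ≤ c) (m : ℕ) :
    ∫ ω, W ω * (∑ j ∈ range (i + m), X j ω - ∑ j ∈ range i, X j ω) ^ 2 ∂μ
      = ∫ ω, W ω * (∑ j ∈ range (i + m), q j ω - ∑ j ∈ range i, q j ω) ∂μ := by
  have mW' := mW.mono (ℱ.le _) le_rfl
  have iC : ∀ k, Integrable (fun ω => ∑ j ∈ range k, q j ω) μ := fun k => integrable_finsetSum _ fun j _ => h.iq j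
  induction m with
  | zero => simp
  | succ m ih =>
    have a1 := int_bdd_mul (h.iS2 hp i m) mW' bW
    have a2 := int_bdd_mul (h.iX2 hp (i + m)) mW' bW
    have mW2 : Measurable[ℱ (i + m)] W := mW.mono (ℱ.mono (by omega)) le_rfl
    have mD : Measurable[ℱ (i + m)] (fun ω => 2 * W ω * (∑ j ∈ range (i + m), X j ω - ∑ j ∈ range i, X j ω)) := by
      have m1 := h.mS (i + m)
      have m2 := (h.mS i).mono (ℱ.mono (by omega : i ≤ i + m)) le_rfl
      exact (measurable_const.mul mW2).mul (m1.sub m2)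
    have a3 : Integrable (fun ω => 2 * W ω * (∑ j ∈ range (i + m), X j ω - ∑ j ∈ range i, X j ω) * X (i + m) ω) μ := by
      have : Integrable (fun ω => (∑ j ∈ range (i + m), X j ω - ∑ j ∈ range i, X j ω) * X (i + m) ω) μ := by
        refine ((h.iS2 hp i m).add (h.iX2 hp (i + m))).mono'
          (((h.mS' _).sub (h.mS' _)).mul (h.mX' _)).aestronglyMeasurable (ae_of_all _ fun ω => ?_)
        simp only [Pi.add_apply, Real.norm_eq_abs]
        rw [abs_le]
        set A := (∑ j ∈ range (i + m), X j ω - ∑ j ∈ range i, X j ω)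
        constructor <;> nlinarith [sq_nonneg (A + X (i + m) ω), sq_nonneg (A - X (i + m) ω), sq_nonneg A, sq_nonneg (X (i + m) ω)]
      have h2 := (int_bdd_mul this mW' bW).const_mul 2
      refine h2.congr (ae_of_all _ fun ω => ?_)
      simp only; ring
    have z := h.e1 (i + m) _ mD a3
    have z2 := h.e2 (i + m) W mW2 bW
    have b1 : Integrable (fun ω => W ω * (∑ j ∈ range (i + m), q j ω - ∑ j ∈ range i, q j ω)) μ :=
      int_bdd_mul ((iC (i + m)).sub (iC i)) mW' bW
    have a13 : Integrable (fun ω => W ω * (∑ j ∈ range (i + m), X j ω - ∑ j ∈ range i, X j ω) ^ 2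
        + 2 * W ω * (∑ j ∈ range (i + m), X j ω - ∑ j ∈ range i, X j ω) * X (i + m) ω) μ := a1.add a3
    have b2 := int_bdd_mul (h.iq (i + m)) mW' bW
    have l : ∫ ω, W ω * (∑ j ∈ range (i + (m + 1)), X j ω - ∑ j ∈ range i, X j ω) ^ 2 ∂μ
      = ∫ ω, (W ω * (∑ j ∈ range (i + m), X j ω - ∑ j ∈ range i, X j ω) ^ 2
        + 2 * W ω * (∑ j ∈ range (i + m), X j ω - ∑ j ∈ range i, X j ω) * X (i + m) ω)
        + W ω * X (i + m) ω ^ 2 ∂μ := by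
      congr 1; ext ω; rw [← add_assoc, sum_range_succ]; ring
    have r : ∫ ω, W ω * (∑ j ∈ range (i + (m + 1)), q j ω - ∑ j ∈ range i, q j ω) ∂μ
      = ∫ ω, W ω * (∑ j ∈ range (i + m), q j ω - ∑ j ∈ range i, q j ω) + W ω * q (i + m) ω ∂μ := by
      congr 1; ext ω; rw [← add_assoc, sum_range_succ]; ring
    rw [l, r, integral_add a13 a2, integral_add a1 a3, integral_add b1 b2, z, z2, ih]
    ring

lemma transfer (h : MDiff μ ℱ p X q) (hp : 1 < p) (i m : ℕ) (y : ℝ) (W r : Ω → ℝ)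
    (mW : Measurable[ℱ i] W) (mr : Measurable[ℱ i] r) (W0 : ∀ ω, 0 ≤ W ω)
    (bW : ∃ c, ∀ ω, |W ω| ≤ c) (r1 : ∀ ω, 1 ≤ r ω)
    (hr : ∀ ω, W ω * (∑ j ∈ range (i + m), q j ω - ∑ j ∈ range i, q j ω) ≤ W ω * (2 * r ω)) :
    ∫ ω, W ω / (1 + (y - ∑ j ∈ range i, X j ω) ^ 2 / r ω) ∂μ
      ≤ 6 * ∫ ω, W ω / (1 + (y - ∑ j ∈ range (i + m), X j ω) ^ 2 / r ω) ∂μ := by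
  obtain ⟨c, hc⟩ := bW
  have mW' := mW.mono (ℱ.le _) le_rfl
  have mr' := mr.mono (ℱ.le _) le_rfl
  have mA : ∀ k, Measurable (fun ω => W ω / (1 + (y - ∑ j ∈ range k, X j ω) ^ 2 / r ω)) := by
    intro k
    have := h.mS' k
    fun_prop
  have A1 : ∀ k ω, 1 ≤ 1 + (y - ∑ j ∈ range k, X j ω) ^ 2 / r ω := by
    intro k ω
    have := r1 ω
    have : 0 ≤ (y - ∑ j ∈ range k, X j ω) ^ 2 / r ω := by positivity
    linarith
  have bA : ∀ k, ∃ c, ∀ ω, |W ω / (1 + (y - ∑ j ∈ range k, X j ω) ^ 2 / r ω)| ≤ c := by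
    intro k
    refine ⟨c, fun ω => ?_⟩
    rw [abs_div, abs_of_nonneg (by linarith [A1 k ω] : 0 ≤ 1 + (y - ∑ j ∈ range k, X j ω) ^ 2 / r ω)]
    exact (div_le_self (abs_nonneg _) (A1 k ω)).trans (hc ω)
  have iA : ∀ k, Integrable (fun ω => W ω / (1 + (y - ∑ j ∈ range k, X j ω) ^ 2 / r ω)) μ :=
    fun k => int_bdd (mA k) (bA k)
  set V : Ω → ℝ := fun ω => W ω / (1 + (y - ∑ j ∈ range i, X j ω) ^ 2 / r ω) / r ω with hV
  have mV : Measurable[ℱ i] V := by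
    have : Measurable (fun z : ℝ × ℝ × ℝ => z.1 / (1 + (y - z.2.1) ^ 2 / z.2.2) / z.2.2) := by fun_prop
    exact this.comp (mW.prodMk ((h.mS i).prodMk mr))
  have bV : ∃ c, ∀ ω, |V ω| ≤ c := by
    obtain ⟨c, hc⟩ := bA i
    refine ⟨c, fun ω => ?_⟩
    rw [hV, abs_div]
    refine (div_le_self (abs_nonneg _) ?_).trans (hc ω)
    rw [abs_of_nonneg] <;> linarith [r1 ω]
  have mV' := mV.mono (ℱ.le _) le_rfl
  have iV := int_bdd_mul (h.iS2 hp i m) mV' bV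
  have iC : ∀ k, Integrable (fun ω => ∑ j ∈ range k, q j ω) μ := fun k => integrable_finsetSum _ fun j _ => h.iq j
  have iVC := int_bdd_mul ((iC (i + m)).sub (iC i)) mV' bV
  have o := h.orth hp i V mV bV m
  have le2 : ∫ ω, V ω * (∑ j ∈ range (i + m), q j ω - ∑ j ∈ range i, q j ω) ∂μ
      ≤ ∫ ω, 2 * (W ω / (1 + (y - ∑ j ∈ range i, X j ω) ^ 2 / r ω)) ∂μ := by
    refine integral_mono iVC ((iA i).const_mul 2) fun ω => ?_
    have h1 := r1 ω
    have h2 := A1 i ω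
    have h3 := hr ω
    simp only [hV]
    set A := 1 + (y - ∑ j ∈ range i, X j ω) ^ 2 / r ω
    have e1 : W ω / A / r ω * (∑ j ∈ range (i + m), q j ω - ∑ j ∈ range i, q j ω)
      = (W ω * (∑ j ∈ range (i + m), q j ω - ∑ j ∈ range i, q j ω)) / (A * r ω) := by field_simp
    have e2 : 2 * (W ω / A) = (W ω * (2 * r ω)) / (A * r ω) := by
      have : A ≠ 0 := by linarith
      have : r ω ≠ 0 := by linarith
      field_simp
    rw [e1, e2]
    have : 0 < A * r ω := by apply mul_pos <;> linarith
    gcongr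
  have pt : ∀ ω, 5 / 18 * (W ω / (1 + (y - ∑ j ∈ range i, X j ω) ^ 2 / r ω))
      - 1 / 18 * (V ω * (∑ j ∈ range (i + m), X j ω - ∑ j ∈ range i, X j ω) ^ 2)
      ≤ W ω / (1 + (y - ∑ j ∈ range (i + m), X j ω) ^ 2 / r ω) := by
    intro ω
    have h1 := r1 ω
    have h2 := A1 i ω
    have h3 := A1 (i + m) ω
    simp only [hV]
    set a := y - ∑ j ∈ range i, X j ω with ha
    set d := ∑ j ∈ range (i + m), X j ω - ∑ j ∈ range i, X j ω with hd
    have hb : y - ∑ j ∈ range (i + m), X j ω = a - d := by rw [ha, hd]; ring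
    rw [hb] at h3 ⊢
    set A := 1 + a ^ 2 / r ω with hA
    set B := 1 + (a - d) ^ 2 / r ω with hB
    set w := d ^ 2 / r ω with hw
    have hr0 : 0 < r ω := by linarith
    have w0 : 0 ≤ w := by positivity
    have hBA : B ≤ 2 * A * (1 + w) := by
      have : B ≤ 1 + 2 * (a ^ 2 / r ω) + 2 * w := by
        have : (a - d) ^ 2 / r ω ≤ (2 * a ^ 2 + 2 * d ^ 2) / r ω := by
          gcongr; nlinarith [sq_nonneg (a + d)]
        rw [hB, hw]
        have e : (2 * a ^ 2 + 2 * d ^ 2) / r ω = 2 * (a ^ 2 / r ω) + 2 * (d ^ 2 / r ω) := by ring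
        linarith
      have : 0 ≤ a ^ 2 / r ω := by positivity
      nlinarith
    have hA0 : 0 < A := by linarith
    have hB0 : 0 < B := by linarith
    have h5 : (5 / 18 - 1 / 18 * w) / A ≤ 1 / B := by
      have : 1 / (2 * A * (1 + w)) ≤ 1 / B := one_div_le_one_div_of_le hB0 hBA
      refine le_trans ?_ this
      rw [div_le_div_iff₀ hA0 (by positivity)]
      have : (5 / 18 - 1 / 18 * w) * (2 * (1 + w)) ≤ 1 := by nlinarith [sq_nonneg (w - 2)]
      nlinarith
    calc _ = W ω * ((5 / 18 - 1 / 18 * w) / A) := by rw [hw]; field_simp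
      _ ≤ W ω * (1 / B) := mul_le_mul_of_nonneg_left h5 (W0 ω)
      _ = _ := by ring
  have fin := integral_mono (((iA i).const_mul (5 / 18)).sub (iV.const_mul (1 / 18))) (iA (i + m)) pt
  rw [integral_sub' ((iA i).const_mul (5 / 18)) (iV.const_mul (1 / 18)), integral_const_mul, integral_const_mul, o] at fin
  rw [integral_const_mul] at le2
  linarith

end MDiff


/-- The slowly integrable kernel. -/
noncomputable def kker (b w : ℝ) : ℝ := (1 + w ^ 2) ^ (-(1 / 2 + b))

lemma kker_nonneg (b w : ℝ) : 0 ≤ kker b w := by unfold kker; positivity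

lemma kker_pos (b w : ℝ) : 0 < kker b w := by unfold kker; positivity

lemma kker_le_one (b w : ℝ) (hb : 0 < b) : kker b w ≤ 1 := by
  unfold kker
  exact Real.rpow_le_one_of_one_le_of_nonpos (by nlinarith [sq_nonneg w]) (by linarith)

lemma kker_measurable (b : ℝ) : Measurable (kker b) := by unfold kker; fun_prop

lemma pow_tangent (b ρ q : ℝ) (hb : 0 < b) (hρ : 0 < ρ) (hq : 0 ≤ q) :
    (ρ + q) ^ (-1 - b) * q ≤ (1 / b) * (ρ ^ (-b) - (ρ + q) ^ (-b)) := by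
  have hR : 0 < ρ + q := by linarith
  have e1 : (ρ + q) ^ (-1 - b) = (ρ + q) ^ (-b) / (ρ + q) := by
    rw [show -1 - b = -b - 1 by ring, Real.rpow_sub_one hR.ne']
  have e2 : ρ ^ (-b) = (ρ + q) ^ (-b) * (ρ / (ρ + q)) ^ (-b) := by
    rw [Real.div_rpow hρ.le hR.le]; field_simp
  have h3 : 1 + b * (q / (ρ + q)) ≤ (ρ / (ρ + q)) ^ (-b) := by
    have hx : 0 < ρ / (ρ + q) := by positivity
    rw [Real.rpow_def_of_pos hx]
    have h1 := Real.add_one_le_exp (Real.log (ρ / (ρ + q)) * -b)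
    have h2 := Real.log_le_sub_one_of_pos hx
    have h4 : ρ / (ρ + q) - 1 = - (q / (ρ + q)) := by field_simp; ring
    rw [h4] at h2
    nlinarith
  have hP : 0 < (ρ + q) ^ (-b) := by positivity
  rw [e1, e2]
  rw [show (1 / b) * ((ρ + q) ^ (-b) * (ρ / (ρ + q)) ^ (-b) - (ρ + q) ^ (-b))
    = (ρ + q) ^ (-b) * (((ρ / (ρ + q)) ^ (-b) - 1) / b) by field_simp]
  rw [show (ρ + q) ^ (-b) / (ρ + q) * q = (ρ + q) ^ (-b) * (q / (ρ + q)) by field_simp]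
  apply mul_le_mul_of_nonneg_left _ hP.le
  rw [le_div_iff₀ hb]; linarith

lemma path_step (b ρ q w : ℝ) (hb : 0 < b) (hb4 : b ≤ 1 / 4) (hρ : 1 ≤ ρ) (hq : 0 ≤ q) (hq1 : q ≤ 1) :
    q * ρ ^ (-(3 + 4 * b) / 2) / (1 + w ^ 2 / ρ) ≤ (8 / b) * (ρ ^ (-b) - (ρ + q) ^ (-b)) * kker b w := by
  have h0 : 0 < ρ := by linarith
  have hw : 0 < 1 + w ^ 2 := by positivity
  have am := Real.geom_mean_le_arith_mean2_weighted (w₁ := 1 / 2 - b) (w₂ := 1 / 2 + b) (p₁ := ρ) (p₂ := 1 + w ^ 2)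
    (by linarith) (by linarith) h0.le hw.le (by ring)
  have am2 : ρ ^ (1 / 2 - b) * (1 + w ^ 2) ^ (1 / 2 + b) ≤ 2 * (ρ + w ^ 2) := by
    nlinarith [sq_nonneg w]
  have hA : 0 < ρ ^ (1 / 2 - b) := by positivity
  have hB : 0 < (1 + w ^ 2) ^ (1 / 2 + b) := by positivity
  have k1 : kker b w = 1 / (1 + w ^ 2) ^ (1 / 2 + b) := by
    unfold kker; rw [Real.rpow_neg hw.le]; simp
  have s1 : q * ρ ^ (-(3 + 4 * b) / 2) / (1 + w ^ 2 / ρ) ≤ 2 * (q * ρ ^ (-1 - b)) * kker b w := by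
    have e : ρ ^ (-(3 + 4 * b) / 2) = ρ ^ (-1 - b) * ρ ^ (1 / 2 - b) / ρ := by
      rw [← Real.rpow_add h0, ← Real.rpow_sub_one h0.ne']; congr 1; ring
    have e2 : q * ρ ^ (-(3 + 4 * b) / 2) / (1 + w ^ 2 / ρ)
        = q * ρ ^ (-1 - b) * (ρ ^ (1 / 2 - b) / (ρ + w ^ 2)) := by
      rw [e]; field_simp
    rw [e2, k1]
    rw [show 2 * (q * ρ ^ (-1 - b)) * (1 / (1 + w ^ 2) ^ (1 / 2 + b))
      = q * ρ ^ (-1 - b) * (2 / (1 + w ^ 2) ^ (1 / 2 + b)) by ring]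
    apply mul_le_mul_of_nonneg_left _ (by positivity)
    rw [div_le_div_iff₀ (by positivity) hB]
    linarith
  have s2 : ρ ^ (-1 - b) ≤ 4 * (ρ + q) ^ (-1 - b) := by
    have h1 : ((ρ + q) / 2) ^ (1 + b) ≤ ρ ^ (1 + b) :=
      Real.rpow_le_rpow (by positivity) (by linarith) (by linarith)
    rw [Real.div_rpow (by positivity) (by norm_num)] at h1
    have h2 : (2:ℝ) ^ (1 + b) ≤ 4 := by
      calc (2:ℝ) ^ (1 + b) ≤ 2 ^ (2:ℝ) := Real.rpow_le_rpow_of_exponent_le (by norm_num) (by linarith)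
        _ = 4 := by norm_num
    have h3 : 0 < (2:ℝ) ^ (1 + b) := by positivity
    have h4 : 0 < (ρ + q) ^ (1 + b) := by positivity
    have h5 : 0 < ρ ^ (1 + b) := by positivity
    rw [show -1 - b = -(1 + b) by ring, Real.rpow_neg h0.le, Real.rpow_neg (by linarith)]
    rw [← div_eq_mul_inv, inv_eq_one_div, div_le_div_iff₀ h5 h4]
    rw [div_le_iff₀ h3] at h1
    nlinarith
  have s3 := pow_tangent b ρ q hb h0 hq
  refine s1.trans ?_
  apply mul_le_mul_of_nonneg_right _ (kker_nonneg b w)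
  have : q * ρ ^ (-1 - b) ≤ q * (4 * (ρ + q) ^ (-1 - b)) := mul_le_mul_of_nonneg_left s2 hq
  have e : 8 / b * (ρ ^ (-b) - (ρ + q) ^ (-b)) = 8 * ((1 / b) * (ρ ^ (-b) - (ρ + q) ^ (-b))) := by ring
  rw [e]; nlinarith

lemma path_sum (b w : ℝ) (hb : 0 < b) (hb4 : b ≤ 1 / 4) (n : ℕ) (r q : ℕ → ℝ)
    (hr : ∀ k, r (k + 1) = r k - q k) (hq : ∀ k, 0 ≤ q k) (hn : 1 ≤ r n) :
    ∑ i ∈ range n, (if q i ≤ 1 then 1 else 0) * q i * r (i + 1) ^ (-(3 + 4 * b) / 2) / (1 + w ^ 2 / r (i + 1))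
      ≤ (8 / b) * kker b w := by
  have anti : ∀ k m, r (k + m) ≤ r k := by
    intro k m
    induction m with
    | zero => simp
    | succ m ih => rw [← add_assoc, hr]; linarith [hq (k + m)]
  have r1 : ∀ k ≤ n, 1 ≤ r k := by
    intro k hk
    have := anti k (n - k)
    rw [Nat.add_sub_cancel' hk] at this
    linarith
  have : ∀ k ≤ n, ∑ i ∈ range k, (if q i ≤ 1 then 1 else 0) * q i * r (i + 1) ^ (-(3 + 4 * b) / 2) / (1 + w ^ 2 / r (i + 1))
      ≤ (8 / b) * (r k ^ (-b) - r 0 ^ (-b)) * kker b w := by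
    intro k
    induction k with
    | zero => simp
    | succ k ih =>
      intro hk
      have ih := ih (by omega)
      rw [sum_range_succ]
      have e : r k = r (k + 1) + q k := by rw [hr]; ring
      have key : (if q k ≤ 1 then 1 else 0) * q k * r (k + 1) ^ (-(3 + 4 * b) / 2) / (1 + w ^ 2 / r (k + 1))
         ≤ (8 / b) * (r (k + 1) ^ (-b) - r k ^ (-b)) * kker b w := by
        split_ifs with h
        · rw [one_mul, e]
          exact path_step b _ _ w hb hb4 (r1 _ hk) (hq k) h
        · simp only [zero_mul, zero_div]
          have : r k ^ (-b) ≤ r (k + 1) ^ (-b) :=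
            Real.rpow_le_rpow_of_nonpos (by linarith [r1 _ hk]) (by rw [e]; linarith [hq k]) (by linarith)
          have := kker_nonneg b w
          apply mul_nonneg _ this
          apply mul_nonneg (by positivity); linarith
      have : (8 / b) * (r (k + 1) ^ (-b) - r 0 ^ (-b)) * kker b w
        = (8 / b) * (r k ^ (-b) - r 0 ^ (-b)) * kker b w + (8 / b) * (r (k + 1) ^ (-b) - r k ^ (-b)) * kker b w := by ring
      linarith
  refine (this n le_rfl).trans ?_
  apply mul_le_mul_of_nonneg_right _ (kker_nonneg b w)
  have h1 : r n ^ (-b) ≤ 1 := Real.rpow_le_one_of_one_le_of_nonpos hn (by linarith)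
  have h2 : 0 ≤ r 0 ^ (-b) := Real.rpow_nonneg (by linarith [r1 0 (by omega)]) _
  calc 8 / b * (r n ^ (-b) - r 0 ^ (-b)) ≤ 8 / b * 1 := by gcongr; linarith
    _ = _ := by ring


/-- indicator of `x ≤ 1` -/
noncomputable def ind1 (x : ℝ) : ℝ := if x ≤ 1 then 1 else 0
lemma ind1_measurable : Measurable ind1 :=
  Measurable.ite measurableSet_Iic measurable_const measurable_const
lemma ind1_nonneg (x : ℝ) : 0 ≤ ind1 x := by unfold ind1; split_ifs <;> norm_num
lemma ind1_le (x : ℝ) : ind1 x ≤ 1 := by unfold ind1; split_ifs <;> norm_num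

namespace MDiff
variable {Ω : Type} {mΩ : MeasurableSpace Ω} {μ : Measure Ω} [IsProbabilityMeasure μ]
  {ℱ : Filtration ℕ mΩ} {p : ℝ} {X q : ℕ → Ω → ℝ}

lemma step (h : MDiff μ ℱ p X q) (hp : 1 < p) (i : ℕ) (y η C : ℝ) (hη : 0 < η) (hC : 1 ≤ C)
    (hs : ∀ r q X u : ℝ, 1 ≤ r → 0 ≤ q → |stdNormalCDF (u - X / √r) - stdNormalCDF (u / √(1 + q / r))
      - (if q ≤ 1 then 1 else 0) * (-(gphi u * X / √r) - u * gphi u / 2 * (X ^ 2 - q) / r)|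
      ≤ η * ((if q ≤ 1 then 1 else 0) * (r ^ (-(3 + 1 / p) / 2) / (1 + u ^ 2)) * (X ^ 2 + q))
        + C * (|X| ^ (2 * p) + (min q 1) ^ p))
    (r : Ω → ℝ) (mr : Measurable[ℱ i] r) (r1 : ∀ ω, 1 ≤ r ω) :
    |∫ ω, stdNormalCDF ((y - ∑ j ∈ range (i + 1), X j ω) / √(r ω)) ∂μ
      - ∫ ω, stdNormalCDF ((y - ∑ j ∈ range i, X j ω) / √(r ω + q i ω)) ∂μ|
    ≤ 2 * η * ∫ ω, (ind1 (q i ω) * q i ω * r ω ^ (-(3 + 1 / p) / 2)) / (1 + (y - ∑ j ∈ range i, X j ω) ^ 2 / r ω) ∂μ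
      + 2 * C * ∫ ω, |X i ω| ^ (2 * p) ∂μ := by
  have mr' := mr.mono (ℱ.le _) le_rfl
  have mI := ind1_measurable
  have mg : Measurable gphi := gphi_continuous.measurable
  have mΦ := cdf_measurable
  set u : Ω → ℝ := fun ω => (y - ∑ j ∈ range i, X j ω) / √(r ω) with hu
  have hr0 : ∀ ω, 0 < √(r ω) := fun ω => Real.sqrt_pos.2 (by linarith [r1 ω])
  have hr1 : ∀ ω, 1 ≤ √(r ω) := fun ω => Real.one_le_sqrt.2 (r1 ω)
  have hu2 : ∀ ω, u ω ^ 2 = (y - ∑ j ∈ range i, X j ω) ^ 2 / r ω := by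
    intro ω
    simp only [hu]
    rw [div_pow, Real.sq_sqrt (by linarith [r1 ω])]
  have mu : Measurable[ℱ i] u := by
    have : Measurable (fun z : ℝ × ℝ => (y - z.1) / √z.2) := by fun_prop
    exact this.comp ((h.mS i).prodMk mr)
  have mIq : Measurable[ℱ i] (fun ω => ind1 (q i ω)) := mI.comp (h.mq i)
  set W1 : Ω → ℝ := fun ω => -(ind1 (q i ω) * gphi (u ω) / √(r ω)) with hW1
  set W2 : Ω → ℝ := fun ω => -(ind1 (q i ω) * (u ω * gphi (u ω)) / 2 / r ω) with hW2
  set G : Ω → ℝ := fun ω => ind1 (q i ω) * (r ω ^ (-(3 + 1 / p) / 2) / (1 + u ω ^ 2)) with hG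
  have mW1 : Measurable[ℱ i] W1 := by
    have : Measurable (fun z : ℝ × ℝ × ℝ => -(z.1 * gphi z.2.1 / √z.2.2)) := by fun_prop
    exact this.comp (mIq.prodMk (mu.prodMk mr))
  have mW2 : Measurable[ℱ i] W2 := by
    have : Measurable (fun z : ℝ × ℝ × ℝ => -(z.1 * (z.2.1 * gphi z.2.1) / 2 / z.2.2)) := by fun_prop
    exact this.comp (mIq.prodMk (mu.prodMk mr))
  have mG : Measurable[ℱ i] G := by
    have : Measurable (fun z : ℝ × ℝ × ℝ => z.1 * (z.2.2 ^ (-(3 + 1 / p) / 2) / (1 + z.2.1 ^ 2))) := by fun_prop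
    exact this.comp (mIq.prodMk (mu.prodMk mr))
  have bW1 : ∃ c, ∀ ω, |W1 ω| ≤ c := by
    refine ⟨1, fun ω => ?_⟩
    have := hr1 ω
    have h1 := ind1_nonneg (q i ω)
    have h2 := gphi_nonneg (u ω)
    simp only [hW1]
    rw [abs_neg, abs_of_nonneg (by positivity)]
    refine (div_le_self (by positivity) this).trans ?_
    exact mul_le_one₀ (ind1_le _) h2 (gphi_le_one _)
  have bW2 : ∃ c, ∀ ω, |W2 ω| ≤ c := by
    refine ⟨1, fun ω => ?_⟩
    have := r1 ω
    have h1 := ind1_nonneg (q i ω)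
    have h2 := abs_mul_gphi_le_one (u ω)
    simp only [hW2]
    rw [abs_neg, abs_div, abs_div, abs_mul, abs_of_nonneg h1, abs_of_nonneg (by linarith : 0 ≤ r ω), abs_two]
    refine (div_le_self (by positivity) this).trans ?_
    refine (div_le_self (by positivity) (by norm_num)).trans ?_
    exact mul_le_one₀ (ind1_le _) (abs_nonneg _) h2
  have G0 : ∀ ω, 0 ≤ G ω := by
    intro ω
    have := r1 ω
    have h1 := ind1_nonneg (q i ω)
    simp only [hG]; positivity
  have bG : ∃ c, ∀ ω, |G ω| ≤ c := by
    refine ⟨1, fun ω => ?_⟩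
    rw [abs_of_nonneg (G0 ω)]
    have := r1 ω
    have h1 := ind1_nonneg (q i ω)
    simp only [hG]
    refine mul_le_one₀ (ind1_le _) (by positivity) ?_
    refine (div_le_self (by positivity) (by nlinarith [sq_nonneg (u ω)])).trans ?_
    refine Real.rpow_le_one_of_one_le_of_nonpos this ?_
    have : 0 < 1 / p := by positivity
    linarith
  have mW1' := mW1.mono (ℱ.le _) le_rfl
  have mW2' := mW2.mono (ℱ.le _) le_rfl
  have mG' := mG.mono (ℱ.le _) le_rfl
  have iL1 := int_bdd_mul (h.iX1 hp i) mW1' bW1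
  have iL2 := int_bdd_mul (h.iX2 hp i) mW2' bW2
  have iL3 := int_bdd_mul (h.iq i) mW2' bW2
  have iG2 := int_bdd_mul (h.iX2 hp i) mG' bG
  have iG3 := int_bdd_mul (h.iq i) mG' bG
  have z1 := h.e1 i W1 mW1 iL1
  have z2 := h.e2 i W2 mW2 bW2
  have z3 := h.e2 i G mG bG
  have bΦ : ∀ z : Ω → ℝ, ∃ c, ∀ ω, |stdNormalCDF (z ω)| ≤ c := fun z =>
    ⟨1, fun ω => by rw [abs_of_nonneg (cdf_nonneg _)]; exact cdf_le_one _⟩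
  have iA1 : Integrable (fun ω => stdNormalCDF ((y - ∑ j ∈ range (i + 1), X j ω) / √(r ω))) μ := by
    refine int_bdd ?_ (bΦ _)
    have := h.mS' (i + 1)
    fun_prop
  have iA2 : Integrable (fun ω => stdNormalCDF ((y - ∑ j ∈ range i, X j ω) / √(r ω + q i ω))) μ := by
    refine int_bdd ?_ (bΦ _)
    have := h.mS' i
    have := h.mq' i
    fun_prop
  have c0 : ∀ ω, 0 ≤ min (q i ω) 1 := fun ω => le_min (h.q0 i ω) zero_le_one
  have iM : Integrable (fun ω => (min (q i ω) 1) ^ p) μ := by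
    refine int_bdd ?_ ⟨1, fun ω => ?_⟩
    · have := h.mq' i
      fun_prop
    · rw [abs_of_nonneg (Real.rpow_nonneg (c0 ω) _)]
      exact Real.rpow_le_one (c0 ω) (min_le_right _ _) (by linarith)
  have iL : Integrable (fun ω => W1 ω * X i ω + (W2 ω * X i ω ^ 2 - W2 ω * q i ω)) μ := iL1.add (iL2.sub iL3)
  have iL23 : Integrable (fun ω => (W2 ω * X i ω ^ 2 - W2 ω * q i ω)) μ := (iL2.sub iL3)
  have zL : ∫ ω, W1 ω * X i ω + (W2 ω * X i ω ^ 2 - W2 ω * q i ω) ∂μ = 0 := by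
    rw [integral_add iL1 iL23, integral_sub iL2 iL3, z1, z2]; ring
  have iR1 : Integrable (fun ω => G ω * X i ω ^ 2 + G ω * q i ω) μ := iG2.add iG3
  have iR2 : Integrable (fun ω => |X i ω| ^ (2 * p) + (min (q i ω) 1) ^ p) μ := (h.iX i).add iM
  have iA : Integrable (fun ω => stdNormalCDF ((y - ∑ j ∈ range (i + 1), X j ω) / √(r ω))
    - stdNormalCDF ((y - ∑ j ∈ range i, X j ω) / √(r ω + q i ω))) μ := iA1.sub iA2
  have main : |∫ ω, (stdNormalCDF ((y - ∑ j ∈ range (i + 1), X j ω) / √(r ω))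
    - stdNormalCDF ((y - ∑ j ∈ range i, X j ω) / √(r ω + q i ω)))
    - (W1 ω * X i ω + (W2 ω * X i ω ^ 2 - W2 ω * q i ω)) ∂μ|
    ≤ ∫ ω, η * (G ω * X i ω ^ 2 + G ω * q i ω) + C * (|X i ω| ^ (2 * p) + (min (q i ω) 1) ^ p) ∂μ := by
    rw [← Real.norm_eq_abs]
    refine norm_integral_le_of_norm_le ((iR1.const_mul η).add (iR2.const_mul C)) (ae_of_all _ fun ω => ?_)
    have := hs (r ω) (q i ω) (X i ω) (u ω) (r1 ω) (h.q0 i ω)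
    rw [Real.norm_eq_abs]
    have hrr := r1 ω
    have hq0 := h.q0 i ω
    have E1 : (y - ∑ j ∈ range (i + 1), X j ω) / √(r ω) = u ω - X i ω / √(r ω) := by
      simp only [hu]; rw [sum_range_succ]; ring
    have E2 : (y - ∑ j ∈ range i, X j ω) / √(r ω + q i ω) = u ω / √(1 + q i ω / r ω) := by
      simp only [hu]
      rw [div_div, ← Real.sqrt_mul (by linarith)]
      congr 2; field_simp
    have E3 : W1 ω * X i ω + (W2 ω * X i ω ^ 2 - W2 ω * q i ω)
       = (if q i ω ≤ 1 then 1 else 0) * (-(gphi (u ω) * X i ω / √(r ω)) - u ω * gphi (u ω) / 2 * (X i ω ^ 2 - q i ω) / r ω) := by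
      simp only [hW1, hW2, ind1]
      ring
    have E4 : G ω * X i ω ^ 2 + G ω * q i ω = (if q i ω ≤ 1 then 1 else 0) * (r ω ^ (-(3 + 1 / p) / 2) / (1 + u ω ^ 2)) * (X i ω ^ 2 + q i ω) := by
      simp only [hG, ind1]; ring
    rw [E1, E2, E3, E4]
    exact this
  rw [integral_sub iA iL, zL, sub_zero, integral_sub iA1 iA2, integral_add (iR1.const_mul η) (iR2.const_mul C),
    integral_const_mul, integral_const_mul, integral_add iG2 iG3, integral_add (h.iX i) iM, z3] at main
  have hm := h.min_q_le hp i
  have eG : ∫ ω, G ω * q i ω ∂μ = ∫ ω, (ind1 (q i ω) * q i ω * r ω ^ (-(3 + 1 / p) / 2)) / (1 + (y - ∑ j ∈ range i, X j ω) ^ 2 / r ω) ∂μ := by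
    congr 1; ext ω
    rw [← hu2]; simp only [hG]; ring
  rw [← eG]
  refine main.trans ?_
  nlinarith

end MDiff


namespace MDiff
variable {Ω : Type} {mΩ : MeasurableSpace Ω} {μ : Measure Ω} [IsProbabilityMeasure μ]
  {ℱ : Filtration ℕ mΩ} {p : ℝ} {X q : ℕ → Ω → ℝ}

lemma core (h : MDiff μ ℱ p X q) (hp : 1 < p) (b : ℝ) (hb : b = 1 / (4 * p)) (y η C : ℝ) (hη : 0 < η) (hC : 1 ≤ C)
    (hs : ∀ r q X u : ℝ, 1 ≤ r → 0 ≤ q → |stdNormalCDF (u - X / √r) - stdNormalCDF (u / √(1 + q / r))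
      - (if q ≤ 1 then 1 else 0) * (-(gphi u * X / √r) - u * gphi u / 2 * (X ^ 2 - q) / r)|
      ≤ η * ((if q ≤ 1 then 1 else 0) * (r ^ (-(3 + 1 / p) / 2) / (1 + u ^ 2)) * (X ^ 2 + q))
        + C * (|X| ^ (2 * p) + (min q 1) ^ p))
    (n : ℕ) (T : ℝ) (hT : ∀ ω, ∑ j ∈ range n, q j ω ≤ T) :
    |∫ ω, stdNormalCDF ((y - ∑ j ∈ range n, X j ω) / √(1 + T - ∑ j ∈ range n, q j ω)) ∂μ
      - stdNormalCDF (y / √(1 + T))|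
    ≤ η * (96 / b) * ∫ ω, kker b (y - ∑ j ∈ range n, X j ω) ∂μ
      + 2 * C * ∑ i ∈ range n, ∫ ω, |X i ω| ^ (2 * p) ∂μ := by
  have hb0 : 0 < b := by rw [hb]; positivity
  have hb4 : b ≤ 1 / 4 := by
    rw [hb]; apply one_div_le_one_div_of_le <;> linarith
  have hbp : 1 / p = 4 * b := by rw [hb]; field_simp
  set a : ℕ → ℝ := fun k => ∫ ω, stdNormalCDF ((y - ∑ j ∈ range k, X j ω) / √(1 + T - ∑ j ∈ range k, q j ω)) ∂μ with ha
  have a0 : a 0 = stdNormalCDF (y / √(1 + T)) := by simp [ha]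
  have r1 : ∀ k ≤ n, ∀ ω, 1 ≤ 1 + T - ∑ j ∈ range k, q j ω := by
    intro k hk ω
    have : ∑ j ∈ range k, q j ω ≤ ∑ j ∈ range n, q j ω :=
      sum_le_sum_of_subset_of_nonneg (range_subset_range.2 hk) fun j _ _ => h.q0 j ω
    linarith [hT ω]
  set W : ℕ → Ω → ℝ := fun i ω => ind1 (q i ω) * q i ω * (1 + T - ∑ j ∈ range (i + 1), q j ω) ^ (-(3 + 1 / p) / 2) with hW
  have mr : ∀ i, Measurable[ℱ i] (fun ω => 1 + T - ∑ j ∈ range (i + 1), q j ω) := fun i =>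
    measurable_const.sub (h.mC i)
  have mI := ind1_measurable
  have mW : ∀ i, Measurable[ℱ i] (W i) := by
    intro i
    have : Measurable (fun z : ℝ × ℝ => ind1 z.1 * z.1 * z.2 ^ (-(3 + 1 / p) / 2)) := by fun_prop
    exact this.comp ((h.mq i).prodMk (mr i))
  have W0 : ∀ i < n, ∀ ω, 0 ≤ W i ω := by
    intro i hi ω
    have := r1 (i + 1) hi ω
    exact mul_nonneg (mul_nonneg (ind1_nonneg _) (h.q0 i ω)) (Real.rpow_nonneg (by linarith) _)
  have W1 : ∀ i < n, ∀ ω, |W i ω| ≤ 1 := by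
    intro i hi ω
    have := r1 (i + 1) hi ω
    rw [abs_of_nonneg (W0 i hi ω)]
    have h1 : ind1 (q i ω) * q i ω ≤ 1 := by
      unfold ind1; split_ifs with h
      · linarith
      · simp
    refine mul_le_one₀ h1 (Real.rpow_nonneg (by linarith) _) ?_
    refine Real.rpow_le_one_of_one_le_of_nonpos this ?_
    have : 0 < 1 / p := by positivity
    linarith
  have st : ∀ i < n, |a (i + 1) - a i| ≤ 2 * η * (6 * ∫ ω, W i ω / (1 + (y - ∑ j ∈ range n, X j ω) ^ 2 / (1 + T - ∑ j ∈ range (i + 1), q j ω)) ∂μ)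
     + 2 * C * ∫ ω, |X i ω| ^ (2 * p) ∂μ := by
    intro i hi
    have s := h.step hp i y η C hη hC hs _ (mr i) (r1 (i + 1) hi)
    have e : ∀ ω, (1 + T - ∑ j ∈ range (i + 1), q j ω) + q i ω = 1 + T - ∑ j ∈ range i, q j ω := by
      intro ω; rw [sum_range_succ]; ring
    simp only [e] at s
    refine s.trans ?_
    have t := h.transfer hp i (n - i) y (W i) _ (mW i) (mr i) (W0 i hi) ⟨1, W1 i hi⟩ (r1 (i + 1) hi) (by
      intro ω
      have hr := r1 (i + 1) hi ω
      rw [Nat.add_sub_cancel' hi.le]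
      by_cases hq : q i ω ≤ 1
      · apply mul_le_mul_of_nonneg_left _ (W0 i hi ω)
        have := hT ω
        have := e ω
        linarith
      · simp [hW, ind1, hq])
    rw [Nat.add_sub_cancel' hi.le] at t
    gcongr
  have iW : ∀ i < n, Integrable (fun ω => W i ω / (1 + (y - ∑ j ∈ range n, X j ω) ^ 2 / (1 + T - ∑ j ∈ range (i + 1), q j ω))) μ := by
    intro i hi
    refine int_bdd ?_ ⟨1, fun ω => ?_⟩
    · have h1 := h.mS' n
      have h2 := (mr i).mono (ℱ.le _) le_rfl
      have h3 := (mW i).mono (ℱ.le _) le_rfl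
      fun_prop
    · have := r1 (i + 1) hi ω
      have h1 : 1 ≤ 1 + (y - ∑ j ∈ range n, X j ω) ^ 2 / (1 + T - ∑ j ∈ range (i + 1), q j ω) := by
        have : 0 ≤ (y - ∑ j ∈ range n, X j ω) ^ 2 / (1 + T - ∑ j ∈ range (i + 1), q j ω) := by positivity
        linarith
      rw [abs_div, abs_of_nonneg (by linarith : 0 ≤ 1 + (y - ∑ j ∈ range n, X j ω) ^ 2 / (1 + T - ∑ j ∈ range (i + 1), q j ω))]
      exact (div_le_self (abs_nonneg _) h1).trans (W1 i hi ω)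
  have ik : Integrable (fun ω => kker b (y - ∑ j ∈ range n, X j ω)) μ := by
    refine int_bdd ((kker_measurable b).comp (measurable_const.sub (h.mS' n))) ⟨1, fun ω => ?_⟩
    rw [abs_of_nonneg (kker_nonneg _ _)]; exact kker_le_one _ _ hb0
  have sumle : ∑ i ∈ range n, ∫ ω, W i ω / (1 + (y - ∑ j ∈ range n, X j ω) ^ 2 / (1 + T - ∑ j ∈ range (i + 1), q j ω)) ∂μ
     ≤ (8 / b) * ∫ ω, kker b (y - ∑ j ∈ range n, X j ω) ∂μ := by
    rw [← integral_finsetSum _ (fun i hi => iW i (mem_range.1 hi)), ← integral_const_mul]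
    refine integral_mono (integrable_finsetSum _ (fun i hi => iW i (mem_range.1 hi))) (ik.const_mul _) fun ω => ?_
    have := path_sum b (y - ∑ j ∈ range n, X j ω) hb0 hb4 n (fun k => 1 + T - ∑ j ∈ range k, q j ω) (fun k => q k ω)
      (by intro k; rw [sum_range_succ]; ring) (fun k => h.q0 k ω) (r1 n le_rfl ω)
    simp only [hW, hbp, ind1]
    exact this
  have tel : a n - a 0 = ∑ i ∈ range n, (a (i + 1) - a i) := (sum_range_sub a n).symm
  rw [← a0]
  change |a n - a 0| ≤ _
  rw [tel]
  refine (abs_sum_le_sum_abs _ _).trans ?_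
  refine (sum_le_sum fun i hi => st i (mem_range.1 hi)).trans ?_
  rw [sum_add_distrib, ← mul_sum, ← mul_sum, ← mul_sum]
  have : 2 * η * (6 * ((8 / b) * ∫ ω, kker b (y - ∑ j ∈ range n, X j ω) ∂μ)) = η * (96 / b) * ∫ ω, kker b (y - ∑ j ∈ range n, X j ω) ∂μ := by ring
  rw [← this]
  gcongr

end MDiff


lemma kker_integrable (b : ℝ) (hb : 0 < b) : Integrable (kker b) := by
  have := integrable_rpow_neg_one_add_norm_sq (E := ℝ) (μ := volume) (r := 1 + 2 * b) (by simp; linarith)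
  refine this.congr (ae_of_all _ fun x => ?_)
  simp only [kker, Real.norm_eq_abs, sq_abs]
  congr 1; ring

lemma kker_shift (b w t : ℝ) (hb : 0 < b) (hb4 : b ≤ 1 / 4) (ht : |w - t| ≤ 1) : kker b w / 3 ≤ kker b t := by
  have h1 : 1 + t ^ 2 ≤ 3 * (1 + w ^ 2) := by
    have : (w - t) ^ 2 ≤ 1 := by rw [← sq_abs]; exact pow_le_one₀ (abs_nonneg _) ht
    nlinarith [sq_nonneg (w + (w - t))]
  have h2 : (3 * (1 + w ^ 2)) ^ (-(1 / 2 + b)) ≤ (1 + t ^ 2) ^ (-(1 / 2 + b)) :=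
    Real.rpow_le_rpow_of_nonpos (by positivity) h1 (by linarith)
  rw [Real.mul_rpow (by norm_num) (by positivity)] at h2
  have h3 : (3:ℝ)⁻¹ ≤ 3 ^ (-(1 / 2 + b)) := by
    rw [← Real.rpow_neg_one]
    exact Real.rpow_le_rpow_of_exponent_le (by norm_num) (by linarith)
  have := kker_nonneg b w
  unfold kker at *
  nlinarith

lemma kker_le_lint (b w : ℝ) (hb : 0 < b) (hb4 : b ≤ 1 / 4) :
    ENNReal.ofReal (kker b w) ≤ 3 * ∫⁻ t, ENNReal.ofReal (kker b t) * Set.indicator {t : ℝ | |w - t| ≤ 1} 1 t := by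
  have ms : MeasurableSet {t : ℝ | |w - t| ≤ 1} := measurableSet_le (by fun_prop) measurable_const
  have hs : {t : ℝ | |w - t| ≤ 1} = Set.Icc (w - 1) (w + 1) := by
    ext t; simp only [Set.mem_setOf_eq, Set.mem_Icc, abs_le]; constructor <;> rintro ⟨h1, h2⟩ <;> constructor <;> linarith
  calc ENNReal.ofReal (kker b w) = 3 * ENNReal.ofReal (kker b w / 3) := by
        rw [show (3:ENNReal) = ENNReal.ofReal 3 by simp, ← ENNReal.ofReal_mul (by norm_num)]
        congr 1; ring
    _ ≤ 3 * (ENNReal.ofReal (kker b w / 3) * volume {t : ℝ | |w - t| ≤ 1}) := by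
        gcongr
        rw [hs, Real.volume_Icc]
        refine le_mul_of_one_le_right (by positivity) ?_
        rw [show w + 1 - (w - 1) = 2 by ring]; norm_num
    _ = 3 * ∫⁻ t in {t : ℝ | |w - t| ≤ 1}, ENNReal.ofReal (kker b w / 3) := by rw [setLIntegral_const]
    _ ≤ 3 * ∫⁻ t in {t : ℝ | |w - t| ≤ 1}, ENNReal.ofReal (kker b t) := by
        gcongr 3 * ?_
        refine setLIntegral_mono' ms fun t ht => ?_
        exact ENNReal.ofReal_le_ofReal (kker_shift b w t hb hb4 ht)
    _ = _ := by
        rw [← lintegral_indicator ms]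
        congr 2; ext t
        by_cases h : t ∈ {t : ℝ | |w - t| ≤ 1} <;> simp [h]

lemma kker_expect (b : ℝ) (hb : 0 < b) (hb4 : b ≤ 1 / 4) :
    ∃ K : ℝ, 0 < K ∧ ∀ (Ω : Type) (mΩ : MeasurableSpace Ω) (μ : Measure Ω), IsProbabilityMeasure μ →
      ∀ (S : Ω → ℝ), Measurable S → ∀ D : ℝ, (∀ y, |μ.real {ω | S ω ≤ y} - stdNormalCDF y| ≤ D) →
      ∀ l : ℝ, 0 < l → ∀ y, ∫ ω, kker b ((y - S ω) / l) ∂μ ≤ K * (l + D) := by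
  set J := ∫ t, kker b t with hJ
  have J0 : 0 ≤ J := integral_nonneg fun t => kker_nonneg b t
  refine ⟨9 * J + 1, by linarith, ?_⟩
  intro Ω mΩ μ hμ S mS D hD l hl y
  have D0 : 0 ≤ D := (abs_nonneg _).trans (hD 0)
  have conc : ∀ t, μ {ω | |(y - S ω) / l - t| ≤ 1} ≤ ENNReal.ofReal (3 * l + 2 * D) := by
    intro t
    rw [← ofReal_measureReal]
    apply ENNReal.ofReal_le_ofReal
    set a := y - l * t - 2 * l
    set c := y - l * t + l
    have sub : {ω | |(y - S ω) / l - t| ≤ 1} ⊆ {ω | S ω ≤ c} \ {ω | S ω ≤ a} := by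
      intro ω hω
      simp only [Set.mem_setOf_eq, abs_le] at hω
      obtain ⟨h1, h2⟩ := hω
      have e : (y - S ω) / l * l = y - S ω := by field_simp
      simp only [Set.mem_diff, Set.mem_setOf_eq, not_le, a, c]
      constructor <;> nlinarith
    have m1 : μ.real ({ω | S ω ≤ c} \ {ω | S ω ≤ a}) = μ.real {ω | S ω ≤ c} - μ.real {ω | S ω ≤ a} := by
      rw [measureReal_diff _ (measurableSet_le mS measurable_const)]
      intro ω hω
      simp only [Set.mem_setOf_eq, a, c] at hω ⊢; linarith
    have m2 : μ.real {ω | |(y - S ω) / l - t| ≤ 1} ≤ μ.real ({ω | S ω ≤ c} \ {ω | S ω ≤ a}) := measureReal_mono sub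
    have h1 := abs_le.1 (hD c)
    have h2 := abs_le.1 (hD a)
    have h3 := abs_le.1 (cdf_lip a c)
    have h4 : |c - a| = 3 * l := by
      simp only [a, c]; rw [abs_of_nonneg] <;> linarith
    rw [h4] at h3
    linarith
  have mk := kker_measurable b
  have ik := kker_integrable b hb
  have mset : MeasurableSet {z : Ω × ℝ | |(y - S z.1) / l - z.2| ≤ 1} := by
    refine measurableSet_le ?_ measurable_const
    have : Measurable (fun z : Ω × ℝ => S z.1) := mS.comp measurable_fst
    fun_prop
  have lk : ∫⁻ t, ENNReal.ofReal (kker b t) = ENNReal.ofReal J :=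
    (ofReal_integral_eq_lintegral_ofReal ik (ae_of_all _ fun t => kker_nonneg b t)).symm
  have main : ∫⁻ ω, ENNReal.ofReal (kker b ((y - S ω) / l)) ∂μ ≤ ENNReal.ofReal (3 * (J * (3 * l + 2 * D))) := by
    calc ∫⁻ ω, ENNReal.ofReal (kker b ((y - S ω) / l)) ∂μ
        ≤ ∫⁻ ω, 3 * (∫⁻ t, ENNReal.ofReal (kker b t) * Set.indicator {z : Ω × ℝ | |(y - S z.1) / l - z.2| ≤ 1} 1 (ω, t)) ∂μ := by
          refine lintegral_mono fun ω => ?_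
          refine (kker_le_lint b _ hb hb4).trans (le_of_eq ?_)
          congr 2
      _ = 3 * ∫⁻ ω, (∫⁻ t, ENNReal.ofReal (kker b t) * Set.indicator {z : Ω × ℝ | |(y - S z.1) / l - z.2| ≤ 1} 1 (ω, t)) ∂μ := by
          rw [lintegral_const_mul' _ _ (by norm_num)]
      _ = 3 * ∫⁻ t, ∫⁻ ω, ENNReal.ofReal (kker b t) * Set.indicator {z : Ω × ℝ | |(y - S z.1) / l - z.2| ≤ 1} 1 (ω, t) ∂μ := by
          congr 1
          refine lintegral_lintegral_swap (f := fun ω t => ENNReal.ofReal (kker b t) * Set.indicator {z : Ω × ℝ | |(y - S z.1) / l - z.2| ≤ 1} 1 (ω, t)) ?_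
          apply Measurable.aemeasurable
          have h1 : Measurable (fun z : Ω × ℝ => ENNReal.ofReal (kker b z.2)) := by fun_prop
          have h2 : Measurable (Set.indicator {z : Ω × ℝ | |(y - S z.1) / l - z.2| ≤ 1} (1 : Ω × ℝ → ENNReal)) :=
            measurable_one.indicator mset
          exact h1.mul h2
      _ ≤ 3 * ∫⁻ t, ENNReal.ofReal (kker b t) * ENNReal.ofReal (3 * l + 2 * D) := by
          gcongr 3 * ?_
          refine lintegral_mono fun t => ?_
          dsimp only
          rw [lintegral_const_mul' _ _ ENNReal.ofReal_ne_top]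
          gcongr
          refine le_trans (le_of_eq ?_) (conc t)
          have ms : MeasurableSet {ω | |(y - S ω) / l - t| ≤ 1} := measurableSet_le (by fun_prop) measurable_const
          rw [← lintegral_indicator_one ms]
          rfl
      _ = ENNReal.ofReal (3 * (J * (3 * l + 2 * D))) := by
          rw [lintegral_mul_const' _ _ ENNReal.ofReal_ne_top, lk, ← ENNReal.ofReal_mul J0,
            show (3:ENNReal) = ENNReal.ofReal 3 by simp, ← ENNReal.ofReal_mul (by norm_num)]
  have ikS : Integrable (fun ω => kker b ((y - S ω) / l)) μ := by
    refine int_bdd (mk.comp (by fun_prop)) ⟨1, fun ω => ?_⟩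
    rw [abs_of_nonneg (kker_nonneg _ _)]; exact kker_le_one _ _ hb
  rw [← ofReal_integral_eq_lintegral_ofReal ikS (ae_of_all _ fun t => kker_nonneg b _)] at main
  have h0 : 0 ≤ 3 * (J * (3 * l + 2 * D)) := by positivity
  have := (ENNReal.ofReal_le_ofReal_iff h0).1 main
  have : 0 ≤ J * D := by positivity
  nlinarith


lemma gauss_sq : Integrable (fun z : ℝ => z ^ 2) (ProbabilityTheory.gaussianReal 0 1)
    ∧ ∫ z, z ^ 2 ∂(ProbabilityTheory.gaussianReal 0 1) = 1 := by
  have h := ProbabilityTheory.memLp_id_gaussianReal (μ := 0) (v := 1) 2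
  have hi := h.integrable_sq
  refine ⟨hi, ?_⟩
  have v := ProbabilityTheory.variance_id_gaussianReal (μ := 0) (v := 1)
  rw [ProbabilityTheory.variance_eq_integral (by fun_prop)] at v
  simpa [ProbabilityTheory.integral_id_gaussianReal] using v

lemma smoothing (Ω : Type) (mΩ : MeasurableSpace Ω) (μ : Measure Ω) (hμ : IsProbabilityMeasure μ)
    (S : Ω → ℝ) (mS : Measurable S) (D Δ l : ℝ) (hl : 0 < l)
    (hD : ∀ y, |μ.real {ω | S ω ≤ y} - stdNormalCDF y| ≤ D)
    (hΔ : ∀ y, |∫ ω, stdNormalCDF ((y - S ω) / l) ∂μ - stdNormalCDF y| ≤ Δ) (y0 : ℝ) :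
    |μ.real {ω | S ω ≤ y0} - stdNormalCDF y0| ≤ Δ + 8 * l + D / 8 := by
  set γ := ProbabilityTheory.gaussianReal 0 1 with hγ
  set G : ℝ → ℝ := fun y => μ.real {ω | S ω ≤ y} with hG
  have D0 : 0 ≤ D := (abs_nonneg _).trans (hD 0)
  have Gm : Monotone G := fun a b hab => measureReal_mono fun ω hω => le_trans hω hab
  have Gmeas : Measurable G := Gm.measurable
  obtain ⟨i2, e2⟩ := gauss_sq
  have mΦ := cdf_measurable
  have iG : ∀ y, Integrable (fun z => G (y - l * z)) γ := by
    intro y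
    refine int_bdd (Gmeas.comp (by fun_prop)) ⟨1, fun z => ?_⟩
    rw [abs_of_nonneg measureReal_nonneg]; exact measureReal_le_one
  have iF : ∀ y, Integrable (fun z => stdNormalCDF (y - l * z)) γ := by
    intro y
    refine int_bdd (mΦ.comp (by fun_prop)) ⟨1, fun z => ?_⟩
    rw [abs_of_nonneg (cdf_nonneg _)]; exact cdf_le_one _
  have fub : ∀ y, ∫ ω, stdNormalCDF ((y - S ω) / l) ∂μ = ∫ z, G (y - l * z) ∂γ := by
    intro y
    set A : Set (Ω × ℝ) := {w | S w.1 ≤ y - l * w.2} with hA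
    have mA : MeasurableSet A := by
      refine measurableSet_le (mS.comp measurable_fst) (by fun_prop)
    have h1 : (fun ω => stdNormalCDF ((y - S ω) / l)) = fun ω => ∫ z, A.indicator (fun _ => (1:ℝ)) (ω, z) ∂γ := by
      ext ω
      rw [cdf_eq_real]
      have : (fun z => A.indicator (fun _ => (1:ℝ)) (ω, z)) = Set.indicator (Set.Iic ((y - S ω) / l)) 1 := by
        ext z
        have : (ω, z) ∈ A ↔ z ∈ Set.Iic ((y - S ω) / l) := by
          simp only [hA, Set.mem_setOf_eq, Set.mem_Iic]
          rw [le_div_iff₀ hl]; constructor <;> intro h <;> linarith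
        by_cases hz : z ∈ Set.Iic ((y - S ω) / l)
        · rw [Set.indicator_of_mem (this.2 hz), Set.indicator_of_mem hz]; rfl
        · rw [Set.indicator_of_notMem (fun h => hz (this.1 h)), Set.indicator_of_notMem hz]
      rw [this, integral_indicator_one measurableSet_Iic]
    have h2 : (fun z => G (y - l * z)) = fun z => ∫ ω, A.indicator (fun _ => (1:ℝ)) (ω, z) ∂μ := by
      ext z
      have ms : MeasurableSet {ω | S ω ≤ y - l * z} := measurableSet_le mS measurable_const
      have : (fun ω => A.indicator (fun _ => (1:ℝ)) (ω, z)) = Set.indicator {ω | S ω ≤ y - l * z} 1 := rfl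
      rw [this, integral_indicator_one ms]
    rw [h1, h2]
    refine integral_integral_swap (f := fun ω z => A.indicator (fun _ => (1:ℝ)) (ω, z)) ?_
    exact (integrable_const (1:ℝ)).indicator mA
  have sm : ∀ y, |∫ z, stdNormalCDF (y - l * z) ∂γ - stdNormalCDF y| ≤ 2 * l := by
    intro y
    have : ∫ z, stdNormalCDF (y - l * z) ∂γ - stdNormalCDF y = ∫ z, stdNormalCDF (y - l * z) - stdNormalCDF y ∂γ := by
      rw [integral_sub (iF y) (integrable_const _)]; simp
    rw [this, ← Real.norm_eq_abs]
    have i3 : Integrable (fun z : ℝ => l * (1 + z ^ 2)) γ := ((integrable_const (1:ℝ)).add i2).const_mul l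
    refine (norm_integral_le_of_norm_le i3 (ae_of_all _ fun z => ?_)).trans (le_of_eq ?_)
    · rw [Real.norm_eq_abs]
      refine (cdf_lip _ _).trans ?_
      rw [show y - l * z - y = -(l * z) by ring, abs_neg, abs_mul, abs_of_pos hl]
      gcongr
      nlinarith [sq_abs z, sq_nonneg (|z| - 1)]
    · rw [integral_const_mul, integral_add (integrable_const _) i2, e2]; simp; ring
  have HI : ∀ y, |∫ z, G (y - l * z) - stdNormalCDF (y - l * z) ∂γ| ≤ Δ + 2 * l := by
    intro y
    rw [integral_sub (iG y) (iF y), ← fub]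
    have h1 := abs_le.1 (hΔ y)
    have h2 := abs_le.1 (sm y)
    rw [abs_le]; constructor <;> linarith
  have iH : ∀ y, Integrable (fun z => G (y - l * z) - stdNormalCDF (y - l * z)) γ := fun y => (iG y).sub (iF y)
  have iQ : Integrable (fun z : ℝ => l * (5 + z ^ 2) + D * z ^ 2 / 8) γ :=
    (((integrable_const (5:ℝ)).add i2).const_mul l).add ((i2.const_mul D).div_const 8)
  have eQ : ∫ z : ℝ, l * (5 + z ^ 2) + D * z ^ 2 / 8 ∂γ = 6 * l + D / 8 := by
    have i5 : Integrable (fun z : ℝ => l * (5 + z ^ 2)) γ := (((integrable_const (5:ℝ)).add i2).const_mul l)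
    rw [integral_add i5 ((i2.const_mul D).div_const 8),
      integral_const_mul, integral_add (integrable_const _) i2, integral_div, integral_const_mul, e2]; simp; ring
  set δ := G y0 - stdNormalCDF y0 with hδ
  have hδD := abs_le.1 (hD y0)
  change |δ| ≤ _
  have lipz : ∀ y z, |stdNormalCDF y0 - stdNormalCDF (y - l * z)| ≤ |y0 - (y - l * z)| := fun y z => cdf_lip _ _
  have upper : δ ≤ Δ + 8 * l + D / 8 := by
    have pt : ∀ z, δ - (l * (5 + z ^ 2) + D * z ^ 2 / 8) ≤ G ((y0 + 4 * l) - l * z) - stdNormalCDF ((y0 + 4 * l) - l * z) := by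
      intro z
      rcases le_or_gt z 4 with hz | hz
      · have h1 : G y0 ≤ G ((y0 + 4 * l) - l * z) := Gm (by nlinarith)
        have h2 := abs_le.1 (lipz (y0 + 4 * l) z)
        have h3 : |y0 - ((y0 + 4 * l) - l * z)| = l * (4 - z) := by
          rw [show y0 - ((y0 + 4 * l) - l * z) = -(l * (4 - z)) by ring, abs_neg, abs_of_nonneg]
          apply mul_nonneg hl.le; linarith
        rw [h3] at h2
        have : l * (4 - z) ≤ l * (5 + z ^ 2) := by
          apply mul_le_mul_of_nonneg_left _ hl.le
          nlinarith [sq_nonneg (z + 1)]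
        have : 0 ≤ D * z ^ 2 / 8 := by positivity
        linarith
      · have h1 := abs_le.1 (hD ((y0 + 4 * l) - l * z))
        have : 2 * D ≤ D * z ^ 2 / 8 := by
          have : 16 ≤ z ^ 2 := by nlinarith
          nlinarith
        have : 0 ≤ l * (5 + z ^ 2) := by positivity
        change -D ≤ G ((y0 + 4 * l) - l * z) - _ ∧ _ at h1
        linarith
    have := integral_mono ((integrable_const δ).sub iQ) (iH (y0 + 4 * l)) pt
    rw [integral_sub' (integrable_const δ) iQ, eQ] at this
    have h2 := abs_le.1 (HI (y0 + 4 * l))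
    simp only [integral_const, probReal_univ, one_smul] at this
    linarith
  have lower : -δ ≤ Δ + 8 * l + D / 8 := by
    have pt : ∀ z, G ((y0 - 4 * l) - l * z) - stdNormalCDF ((y0 - 4 * l) - l * z) ≤ δ + (l * (5 + z ^ 2) + D * z ^ 2 / 8) := by
      intro z
      rcases le_or_gt (-4) z with hz | hz
      · have h1 : G ((y0 - 4 * l) - l * z) ≤ G y0 := Gm (by nlinarith)
        have h2 := abs_le.1 (lipz (y0 - 4 * l) z)
        have h3 : |y0 - ((y0 - 4 * l) - l * z)| = l * (4 + z) := by
          rw [show y0 - ((y0 - 4 * l) - l * z) = (l * (4 + z)) by ring, abs_of_nonneg]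
          apply mul_nonneg hl.le; linarith
        rw [h3] at h2
        have : l * (4 + z) ≤ l * (5 + z ^ 2) := by
          apply mul_le_mul_of_nonneg_left _ hl.le
          nlinarith [sq_nonneg (z - 1)]
        have : 0 ≤ D * z ^ 2 / 8 := by positivity
        linarith
      · have h1 := abs_le.1 (hD ((y0 - 4 * l) - l * z))
        have : 2 * D ≤ D * z ^ 2 / 8 := by
          have : 16 ≤ z ^ 2 := by nlinarith
          nlinarith
        have : 0 ≤ l * (5 + z ^ 2) := by positivity
        change _ ∧ G ((y0 - 4 * l) - l * z) - _ ≤ D at h1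
        linarith
    have := integral_mono (iH (y0 - 4 * l)) ((integrable_const δ).add iQ) pt
    rw [integral_add' (integrable_const δ) iQ, eQ] at this
    have h2 := abs_le.1 (HI (y0 - 4 * l))
    simp only [integral_const, probReal_univ, one_smul] at this
    linarith
  rw [abs_le]; constructor <;> linarith


namespace MDiff
variable {Ω : Type} {mΩ : MeasurableSpace Ω} {μ : Measure Ω} [IsProbabilityMeasure μ]
  {ℱ : Filtration ℕ mΩ} {p : ℝ} {X q : ℕ → Ω → ℝ}

lemma scale (h : MDiff μ ℱ p X q) (hp : 1 < p) (χ : ℕ → Ω → ℝ) (mχ : ∀ i, Measurable[ℱ i] (χ i))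
    (h01 : ∀ i ω, χ i ω = 0 ∨ χ i ω = 1) (c : ℝ) (hc : 0 < c) :
    MDiff μ ℱ p (fun i ω => χ i ω * X i ω * c) (fun i ω => χ i ω * q i ω * c ^ 2) := by
  have mχ' : ∀ i, Measurable (χ i) := fun i => (mχ i).mono (ℱ.le _) le_rfl
  have bχ : ∀ i, ∃ c, ∀ ω, |χ i ω| ≤ c := fun i => ⟨1, fun ω => by
    rcases h01 i ω with h | h <;> simp [h]⟩
  have χ0 : ∀ i ω, 0 ≤ χ i ω := fun i ω => by rcases h01 i ω with h | h <;> simp [h]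
  constructor
  · intro i
    exact (((mχ i).mono (ℱ.mono (by omega)) le_rfl).mul (h.mX i)).mul_const c
  · intro i
    exact ((mχ i).mul (h.mq i)).mul_const _
  · intro i ω
    have := χ0 i ω
    have := h.q0 i ω
    positivity
  · intro i
    have := (int_bdd_mul (h.iX i) (mχ' i) (bχ i)).mul_const (c ^ (2 * p))
    refine this.congr (ae_of_all _ fun ω => ?_)
    dsimp only
    rcases h01 i ω with h | h
    · rw [h]; simp; rw [Real.zero_rpow (by linarith)]
    · rw [h]; simp only [one_mul]
      rw [abs_mul, abs_of_pos hc, Real.mul_rpow (abs_nonneg _) hc.le]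
  · intro i
    exact (int_bdd_mul (h.iq i) (mχ' i) (bχ i)).mul_const _
  · intro i W mW iW
    have e : ∀ ω, W ω * (χ i ω * X i ω * c) = (W ω * χ i ω * c) * X i ω := fun ω => by ring
    simp only [e] at iW ⊢
    exact h.e1 i _ ((mW.mul (mχ i)).mul_const c) iW
  · intro i W mW bW
    have e1 : ∀ ω, W ω * (χ i ω * X i ω * c) ^ 2 = (W ω * χ i ω * c ^ 2) * X i ω ^ 2 := fun ω => by
      rcases h01 i ω with h | h <;> rw [h] <;> ring
    have e2 : ∀ ω, W ω * (χ i ω * q i ω * c ^ 2) = (W ω * χ i ω * c ^ 2) * q i ω := fun ω => by ring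
    simp only [e1, e2]
    refine h.e2 i _ ((mW.mul (mχ i)).mul_const _) ?_
    obtain ⟨d, hd⟩ := bW
    refine ⟨d * c ^ 2, fun ω => ?_⟩
    rw [abs_mul, abs_mul, abs_of_nonneg (sq_nonneg c)]
    apply mul_le_mul_of_nonneg_right _ (sq_nonneg c)
    refine le_trans ?_ (hd ω)
    refine mul_le_of_le_one_right (abs_nonneg _) ?_
    rcases h01 i ω with h | h <;> simp [h]

end MDiff

lemma kker_ge_inv (b u : ℝ) (hb4 : b ≤ 1 / 4) : 1 / (1 + u ^ 2) ≤ kker b u := by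
  unfold kker
  rw [one_div, ← Real.rpow_neg_one]
  exact Real.rpow_le_rpow_of_exponent_le (by nlinarith [sq_nonneg u]) (by linarith)

lemma markov_bad {Ω : Type} {mΩ : MeasurableSpace Ω} {μ : Measure Ω} {Z : Ω → ℝ} (p κ N : ℝ)
    (hκ : 0 < κ) (hp : 0 < p)
    (iZ : Integrable (fun ω => |Z ω| ^ p) μ) (hN : ∫ ω, |Z ω| ^ p ∂μ ≤ N) :
    μ.real {ω | κ ≤ |Z ω|} ≤ N / κ ^ p := by
  have h1 := mul_meas_ge_le_integral_of_nonneg (μ := μ) (ae_of_all _ fun ω => by positivity) iZ (κ ^ p)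
  have e : {ω | κ ^ p ≤ |Z ω| ^ p} = {ω | κ ≤ |Z ω|} := by
    ext ω
    exact Real.rpow_le_rpow_iff hκ.le (abs_nonneg _) hp
  rw [e] at h1
  rw [le_div_iff₀ (by positivity)]
  linarith


/-- stopping indicator -/
noncomputable def chi {Ω : Type} (q : ℕ → Ω → ℝ) (κ : ℝ) (j : ℕ) (ω : Ω) : ℝ :=
  if ∑ i ∈ range (j + 1), q i ω ≤ 1 + κ then 1 else 0

lemma chi_01 {Ω : Type} (q : ℕ → Ω → ℝ) (κ : ℝ) (j : ℕ) (ω : Ω) : chi q κ j ω = 0 ∨ chi q κ j ω = 1 := by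
  unfold chi; split_ifs <;> simp

lemma chi_sum_le {Ω : Type} (q : ℕ → Ω → ℝ) (hq : ∀ i ω, 0 ≤ q i ω) (κ : ℝ) (hκ : 0 ≤ κ) (ω : Ω) (n : ℕ) :
    ∑ j ∈ range n, chi q κ j ω * q j ω ≤ 1 + κ := by
  induction n with
  | zero => simp; linarith
  | succ n ih =>
    by_cases h : ∑ i ∈ range (n + 1), q i ω ≤ 1 + κ
    · refine le_trans (sum_le_sum fun j _ => ?_) h
      have := hq j ω
      rcases chi_01 q κ j ω with h | h <;> rw [h] <;> linarith
    · rw [sum_range_succ]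
      simp only [chi, h, if_false, zero_mul, add_zero]
      exact ih

lemma chi_eq_one {Ω : Type} (q : ℕ → Ω → ℝ) (hq : ∀ i ω, 0 ≤ q i ω) (κ : ℝ) (ω : Ω) (n : ℕ)
    (h : ∑ j ∈ range n, q j ω ≤ 1 + κ) (j : ℕ) (hj : j ∈ range n) : chi q κ j ω = 1 := by
  have : ∑ i ∈ range (j + 1), q i ω ≤ ∑ i ∈ range n, q i ω :=
    sum_le_sum_of_subset_of_nonneg (range_subset_range.2 (mem_range.1 hj)) fun i _ _ => hq i ω
  unfold chi; rw [if_pos (by linarith)]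

namespace MDiff
variable {Ω : Type} {mΩ : MeasurableSpace Ω} {μ : Measure Ω} [IsProbabilityMeasure μ]
  {ℱ : Filtration ℕ mΩ} {p : ℝ} {X q : ℕ → Ω → ℝ}

lemma chi_meas (h : MDiff μ ℱ p X q) (κ : ℝ) (j : ℕ) : Measurable[ℱ j] (chi q κ j) :=
  Measurable.ite (measurableSet_le (h.mC j) measurable_const) measurable_const measurable_const

lemma delta (h : MDiff μ ℱ p X q) (hp : 1 < p) (b : ℝ) (hb : b = 1 / (4 * p)) (η C : ℝ) (hη : 0 < η) (hη1 : η ≤ 1 / 2) (hC : 1 ≤ C)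
    (hs : ∀ r q X u : ℝ, 1 ≤ r → 0 ≤ q → |stdNormalCDF (u - X / √r) - stdNormalCDF (u / √(1 + q / r))
      - (if q ≤ 1 then 1 else 0) * (-(gphi u * X / √r) - u * gphi u / 2 * (X ^ 2 - q) / r)|
      ≤ η * ((if q ≤ 1 then 1 else 0) * (r ^ (-(3 + 1 / p) / 2) / (1 + u ^ 2)) * (X ^ 2 + q))
        + C * (|X| ^ (2 * p) + (min q 1) ^ p))
    (n : ℕ) (ε : ℝ) (hε : 0 < ε) (hε1 : ε ≤ 1)
    (iCV : Integrable (fun ω => |∑ j ∈ range n, q j ω - 1| ^ p) μ)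
    (hN1 : ∑ i ∈ range n, ∫ ω, |X i ω| ^ (2 * p) ∂μ ≤ ε ^ (2 * p + 1))
    (hN2 : ∫ ω, |∑ j ∈ range n, q j ω - 1| ^ p ∂μ ≤ ε ^ (2 * p + 1)) (y : ℝ) :
    |∫ ω, stdNormalCDF ((y - ∑ j ∈ range n, chi q (η * ε ^ 2) j ω * X j ω) / ε) ∂μ - stdNormalCDF y|
    ≤ η * (96 / b + 400000) * ∫ ω, kker b ((y - ∑ j ∈ range n, chi q (η * ε ^ 2) j ω * X j ω) / ε) ∂μ
      + (2 * C + 2 + η ^ (-p)) * ε := by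
  have hb0 : 0 < b := by rw [hb]; positivity
  have hb4 : b ≤ 1 / 4 := by
    rw [hb]; apply one_div_le_one_div_of_le <;> linarith
  set κ := η * ε ^ 2 with hκ
  have hκ0 : 0 < κ := by positivity
  set St : Ω → ℝ := fun ω => ∑ j ∈ range n, chi q κ j ω * X j ω with hSt
  set Ct : Ω → ℝ := fun ω => ∑ j ∈ range n, chi q κ j ω * q j ω with hCt
  have mχ := fun i => h.chi_meas κ i
  have h2 := h.scale hp (chi q κ) mχ (chi_01 q κ) ε⁻¹ (by positivity)
  have eS : ∀ ω, ∑ j ∈ range n, chi q κ j ω * X j ω * ε⁻¹ = St ω * ε⁻¹ := fun ω => (sum_mul ..).symm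
  have eC : ∀ ω, ∑ j ∈ range n, chi q κ j ω * q j ω * ε⁻¹ ^ 2 = Ct ω * ε⁻¹ ^ 2 := fun ω => (sum_mul ..).symm
  have mSt : Measurable St := by
    refine Finset.measurable_fun_sum _ fun j _ => ((mχ j).mono (ℱ.le _) le_rfl).mul (h.mX' j)
  have mCt : Measurable Ct := by
    refine Finset.measurable_fun_sum _ fun j _ => ((mχ j).mono (ℱ.le _) le_rfl).mul (h.mq' j)
  have Cle : ∀ ω, Ct ω ≤ 1 + κ := fun ω => chi_sum_le q h.q0 κ hκ0.le ω n
  have co := h2.core hp b hb (y * ε⁻¹) η C hη hC hs n ((1 + κ) * ε⁻¹ ^ 2) (by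
    intro ω
    rw [eC]
    exact mul_le_mul_of_nonneg_right (Cle ω) (by positivity))
  simp only [eS, eC] at co
  -- moments
  have mom : ∑ i ∈ range n, ∫ ω, |chi q κ i ω * X i ω * ε⁻¹| ^ (2 * p) ∂μ ≤ ε := by
    have : ∀ i ∈ range n, ∫ ω, |chi q κ i ω * X i ω * ε⁻¹| ^ (2 * p) ∂μ ≤ (∫ ω, |X i ω| ^ (2 * p) ∂μ) * ε⁻¹ ^ (2 * p) := by
      intro i _
      rw [← integral_mul_const]
      refine integral_mono (h2.iX i) ((h.iX i).mul_const _) fun ω => ?_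
      dsimp only
      rw [← Real.mul_rpow (abs_nonneg _) (by positivity)]
      apply Real.rpow_le_rpow (abs_nonneg _) _ (by linarith)
      rw [abs_mul, abs_mul, abs_of_pos (inv_pos.2 hε)]
      apply mul_le_mul_of_nonneg_right _ (by positivity)
      rcases chi_01 q κ i ω with h | h <;> simp [h]
    refine (sum_le_sum this).trans ?_
    rw [← sum_mul]
    refine (mul_le_mul_of_nonneg_right hN1 (by positivity)).trans (le_of_eq ?_)
    rw [Real.rpow_add hε, Real.rpow_one, Real.inv_rpow hε.le]
    field_simp
  -- space normalisation
  have hsp : |stdNormalCDF (y * ε⁻¹ / √(1 + (1 + κ) * ε⁻¹ ^ 2)) - stdNormalCDF y| ≤ 2 * ε := by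
    set c := √(1 + κ + ε ^ 2) with hc
    have c1 : 1 ≤ c := Real.one_le_sqrt.2 (by nlinarith)
    have e : y * ε⁻¹ / √(1 + (1 + κ) * ε⁻¹ ^ 2) = y / c := by
      have : 1 + (1 + κ) * ε⁻¹ ^ 2 = (1 + κ + ε ^ 2) / ε ^ 2 := by field_simp; ring
      rw [this, Real.sqrt_div (by positivity), Real.sqrt_sq hε.le, ← hc]
      field_simp
    rw [e]
    have := cdf_scale (y / c) c c1
    rw [mul_div_cancel₀ _ (by linarith : c ≠ 0), abs_sub_comm] at this
    refine this.trans ?_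
    have : c ≤ 1 + (κ + ε ^ 2) := by
      rw [hc]; apply Real.sqrt_le_iff.2; constructor
      · positivity
      · nlinarith [sq_nonneg (κ + ε ^ 2)]
    have : ε ^ 2 ≤ ε := by nlinarith
    have : κ ≤ ε := by rw [hκ]; nlinarith
    linarith
  -- terminal time
  have mk := kker_measurable b
  have mΦ := cdf_measurable
  have ik : Integrable (fun ω => kker b ((y - St ω) / ε)) μ := by
    refine int_bdd (mk.comp (by fun_prop)) ⟨1, fun ω => ?_⟩
    rw [abs_of_nonneg (kker_nonneg _ _)]; exact kker_le_one _ _ hb0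
  have iA : Integrable (fun ω => stdNormalCDF ((y - St ω) / ε)) μ := by
    refine int_bdd (mΦ.comp (by fun_prop)) ⟨1, fun z => ?_⟩
    rw [abs_of_nonneg (cdf_nonneg _)]; exact cdf_le_one _
  have iB : Integrable (fun ω => stdNormalCDF ((y * ε⁻¹ - St ω * ε⁻¹) / √(1 + (1 + κ) * ε⁻¹ ^ 2 - Ct ω * ε⁻¹ ^ 2))) μ := by
    refine int_bdd (mΦ.comp (by fun_prop)) ⟨1, fun z => ?_⟩
    rw [abs_of_nonneg (cdf_nonneg _)]; exact cdf_le_one _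
  have pt : ∀ ω, |stdNormalCDF ((y * ε⁻¹ - St ω * ε⁻¹) / √(1 + (1 + κ) * ε⁻¹ ^ 2 - Ct ω * ε⁻¹ ^ 2)) - stdNormalCDF ((y - St ω) / ε)|
      ≤ 400000 * η * kker b ((y - St ω) / ε) + |∑ j ∈ range n, q j ω - 1| ^ p / κ ^ p := by
    intro ω
    set τ := (1 + κ - Ct ω) / ε ^ 2 with hτ
    have τ0 : 0 ≤ τ := by have := Cle ω; rw [hτ]; apply div_nonneg <;> [linarith; positivity]
    have e1 : 1 + (1 + κ) * ε⁻¹ ^ 2 - Ct ω * ε⁻¹ ^ 2 = 1 + τ := by rw [hτ]; field_simp; ring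
    have e2 : y * ε⁻¹ - St ω * ε⁻¹ = (y - St ω) / ε := by field_simp
    rw [e1, e2]
    set u := (y - St ω) / ε
    have k0 := kker_nonneg b u
    by_cases hg : |∑ j ∈ range n, q j ω - 1| ≤ κ
    · have hg2 := abs_le.1 hg
      have eCt : Ct ω = ∑ j ∈ range n, q j ω := by
        refine sum_congr rfl fun j hj => ?_
        rw [chi_eq_one q h.q0 κ ω n (by linarith) j hj, one_mul]
      have τ1 : τ ≤ 2 * η := by
        rw [hτ, div_le_iff₀ (by positivity), eCt]
        rw [show 2 * η * ε ^ 2 = 2 * κ by rw [hκ]; ring]; linarith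
      have tl := time_lip u τ τ0 (by linarith)
      have kg := kker_ge_inv b u hb4
      have : 0 ≤ |∑ j ∈ range n, q j ω - 1| ^ p / κ ^ p := by positivity
      have e3 : 200000 / (1 + u ^ 2) * τ = 200000 * (1 / (1 + u ^ 2)) * τ := by ring
      rw [e3] at tl
      have : 1 / (1 + u ^ 2) * τ ≤ kker b u * (2 * η) := by gcongr
      linarith
    · have h1 : 1 ≤ |∑ j ∈ range n, q j ω - 1| ^ p / κ ^ p := by
        rw [one_le_div (by positivity)]
        exact Real.rpow_le_rpow hκ0.le (by linarith) (by linarith)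
      have h2 : |stdNormalCDF (u / √(1 + τ)) - stdNormalCDF u| ≤ 1 := by
        have := cdf_nonneg (u / √(1 + τ))
        have := cdf_nonneg u
        have := cdf_le_one (u / √(1 + τ))
        have := cdf_le_one u
        rw [abs_le]; constructor <;> linarith
      have : 0 ≤ 400000 * η * kker b u := by positivity
      linarith
  have hterm : |∫ ω, stdNormalCDF ((y * ε⁻¹ - St ω * ε⁻¹) / √(1 + (1 + κ) * ε⁻¹ ^ 2 - Ct ω * ε⁻¹ ^ 2)) ∂μ
      - ∫ ω, stdNormalCDF ((y - St ω) / ε) ∂μ| ≤ 400000 * η * ∫ ω, kker b ((y - St ω) / ε) ∂μ + η ^ (-p) * ε := by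
    rw [← integral_sub iB iA, ← Real.norm_eq_abs]
    refine (norm_integral_le_of_norm_le ((ik.const_mul (400000 * η)).add (iCV.div_const (κ ^ p))) (ae_of_all _ pt)).trans ?_
    rw [integral_add' (ik.const_mul _) (iCV.div_const _), integral_const_mul, integral_div]
    gcongr
    rw [div_le_iff₀ (by positivity)]
    refine hN2.trans (le_of_eq ?_)
    rw [hκ, Real.mul_rpow hη.le (by positivity), ← Real.rpow_natCast, ← Real.rpow_mul hε.le, Real.rpow_add hε,
      Real.rpow_neg hη.le]
    push_cast
    field_simp
    simp
  have e4 : ∀ ω, y * ε⁻¹ - St ω * ε⁻¹ = (y - St ω) / ε := fun ω => by field_simp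
  have e5 : ∫ ω, kker b (y * ε⁻¹ - St ω * ε⁻¹) ∂μ = ∫ ω, kker b ((y - St ω) / ε) ∂μ := by simp only [e4]
  rw [e5] at co
  have c1 := abs_le.1 co
  have c2 := abs_le.1 hterm
  have c3 := abs_le.1 hsp
  have c4 : 2 * C * ∑ i ∈ range n, ∫ ω, |chi q κ i ω * X i ω * ε⁻¹| ^ (2 * p) ∂μ ≤ 2 * C * ε := by gcongr
  set I := ∫ ω, kker b ((y - St ω) / ε) ∂μ
  have e6 : η * (96 / b + 400000) * I = η * (96 / b) * I + 400000 * η * I := by ring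
  rw [e6, abs_le]
  constructor <;> linarith

end MDiff


lemma haeusler (p : ℝ) (hp : 1 < p) :
    ∃ C : ℝ, 0 < C ∧ ∀ (Ω : Type) (mΩ : MeasurableSpace Ω) (μ : Measure Ω), IsProbabilityMeasure μ →
      ∀ (ℱ : Filtration ℕ mΩ) (X q : ℕ → Ω → ℝ), MDiff μ ℱ p X q → ∀ (n : ℕ) (ε : ℝ), 0 < ε → ε ≤ 1 →
      Integrable (fun ω => |∑ j ∈ range n, q j ω - 1| ^ p) μ →
      ∑ i ∈ range n, ∫ ω, |X i ω| ^ (2 * p) ∂μ ≤ ε ^ (2 * p + 1) →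
      ∫ ω, |∑ j ∈ range n, q j ω - 1| ^ p ∂μ ≤ ε ^ (2 * p + 1) →
      ∀ y, stdNormalCDF y - C * ε ≤ μ.real {ω | ∑ j ∈ range n, X j ω ≤ y} := by
  set b := 1 / (4 * p) with hb
  have hb0 : 0 < b := by rw [hb]; positivity
  have hb4 : b ≤ 1 / 4 := by
    rw [hb]; apply one_div_le_one_div_of_le <;> linarith
  obtain ⟨K, K0, hK⟩ := kker_expect b hb0 hb4
  set A := (96 / b + 400000) * K with hA
  have A0 : 0 < A := by positivity
  set η := 1 / (8 * A + 2) with hη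
  have η0 : 0 < η := by positivity
  have η1 : η ≤ 1 / 2 := by
    rw [hη]; apply one_div_le_one_div_of_le <;> linarith
  have ηA : η * A ≤ 1 / 8 := by
    rw [hη, one_div, inv_mul_le_iff₀ (by positivity)]; linarith
  obtain ⟨C, C1, hs⟩ := one_step p η hp η0
  have ηp : 0 < η ^ (-p) := by positivity
  set C2 := 1 / 8 + (2 * C + 2 + η ^ (-p)) + 8 with hC2
  refine ⟨2 * C2 + η ^ (-p), by positivity, ?_⟩
  intro Ω mΩ μ hμ ℱ X q h n ε hε hε1 iCV hN1 hN2 y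
  set κ := η * ε ^ 2 with hκ
  have hκ0 : 0 < κ := by positivity
  set St : Ω → ℝ := fun ω => ∑ j ∈ range n, chi q κ j ω * X j ω with hSt
  have mχ := fun i => h.chi_meas κ i
  have mSt : Measurable St := by
    refine Finset.measurable_fun_sum _ fun j _ => ((mχ j).mono (ℱ.le _) le_rfl).mul (h.mX' j)
  have b1 : ∀ y, |μ.real {ω | St ω ≤ y} - stdNormalCDF y| ≤ 1 := by
    intro y
    have := cdf_nonneg y
    have := cdf_le_one y
    have h1 : 0 ≤ μ.real {ω | St ω ≤ y} := measureReal_nonneg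
    have h2 : μ.real {ω | St ω ≤ y} ≤ 1 := measureReal_le_one
    rw [abs_le]; constructor <;> linarith
  set D := ⨆ y, |μ.real {ω | St ω ≤ y} - stdNormalCDF y| with hD
  have hDy : ∀ y, |μ.real {ω | St ω ≤ y} - stdNormalCDF y| ≤ D := by
    intro y
    exact le_ciSup (f := fun y => |μ.real {ω | St ω ≤ y} - stdNormalCDF y|) ⟨1, by rintro _ ⟨y, rfl⟩; exact b1 y⟩ y
  have D0 : 0 ≤ D := (abs_nonneg _).trans (hDy 0)
  have dl : ∀ y, |∫ ω, stdNormalCDF ((y - St ω) / ε) ∂μ - stdNormalCDF y| ≤ 1 / 8 * (ε + D) + (2 * C + 2 + η ^ (-p)) * ε := by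
    intro y
    refine (h.delta hp b hb η C η0 η1 C1 hs n ε hε hε1 iCV hN1 hN2 y).trans ?_
    refine add_le_add ?_ le_rfl
    have hk := hK Ω mΩ μ hμ St mSt D hDy ε hε y
    calc η * (96 / b + 400000) * ∫ ω, kker b ((y - St ω) / ε) ∂μ ≤ η * (96 / b + 400000) * (K * (ε + D)) := by gcongr
      _ = η * A * (ε + D) := by rw [hA]; ring
      _ ≤ 1 / 8 * (ε + D) := by gcongr
  have sm := smoothing Ω mΩ μ hμ St mSt D _ ε hε hDy dl
  have hDle : D ≤ 1 / 8 * (ε + D) + (2 * C + 2 + η ^ (-p)) * ε + 8 * ε + D / 8 := ciSup_le sm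
  have hDf : D ≤ 2 * C2 * ε := by
    have : D ≤ C2 * ε + D / 4 := by rw [hC2]; linarith
    have : 0 ≤ C2 * ε := by positivity
    linarith
  have bad : μ.real {ω | κ ≤ |∑ j ∈ range n, q j ω - 1|} ≤ η ^ (-p) * ε := by
    refine (markov_bad p κ _ hκ0 (by linarith) iCV hN2).trans (le_of_eq ?_)
    rw [hκ, Real.mul_rpow η0.le (by positivity), ← Real.rpow_natCast, ← Real.rpow_mul hε.le, Real.rpow_add hε,
      Real.rpow_neg η0.le]
    push_cast
    field_simp
    simp
  have sub : {ω | St ω ≤ y} ⊆ {ω | ∑ j ∈ range n, X j ω ≤ y} ∪ {ω | κ ≤ |∑ j ∈ range n, q j ω - 1|} := by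
    intro ω hω
    by_cases hg : κ ≤ |∑ j ∈ range n, q j ω - 1|
    · right; exact hg
    · left
      push Not at hg
      have hg2 := abs_le.1 hg.le
      have : St ω = ∑ j ∈ range n, X j ω := by
        refine sum_congr rfl fun j hj => ?_
        rw [chi_eq_one q h.q0 κ ω n (by linarith) j hj, one_mul]
      change ∑ j ∈ range n, X j ω ≤ y
      rw [← this]; exact hω
  have m1 := (measureReal_mono (μ := μ) sub).trans (measureReal_union_le _ _)
  have h1 := abs_le.1 (hDy y)
  linarith


/-- truncated square -/
noncomputable def trY (a x : ℝ) : ℝ := if x ^ 2 ≤ a then x ^ 2 else 0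
lemma trY_measurable (a : ℝ) : Measurable (trY a) :=
  Measurable.ite (measurableSet_le (by fun_prop) measurable_const) (by fun_prop) measurable_const
lemma trY_nonneg (a x : ℝ) : 0 ≤ trY a x := by unfold trY; split_ifs <;> positivity
lemma trY_le (a x : ℝ) (ha : 0 ≤ a) : trY a x ≤ a := by unfold trY; split_ifs <;> assumption
lemma trY_le_sq (a x : ℝ) : trY a x ≤ x ^ 2 := by unfold trY; split_ifs <;> [exact le_rfl; positivity]

lemma exp_trY (p a κ c x : ℝ) (hp : 1 < p) (ha : 0 < a) (hκ : 0 < κ) (hc : c = κ ^ (2 - p) + a ^ (2 - p)) :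
    Real.exp (a⁻¹ * trY a x) ≤ 1 + a⁻¹ * (1 + a⁻¹ * κ) * x ^ 2 + a⁻¹ ^ 2 * c * |x| ^ (2 * p) := by
  set m := trY a x with hm
  have m0 : 0 ≤ m := trY_nonneg a x
  have ma : m ≤ a := trY_le a x ha.le
  have mx : m ≤ x ^ 2 := trY_le_sq a x
  have c0 : 0 < c := by rw [hc]; positivity
  have h1 : Real.exp (a⁻¹ * m) ≤ 1 + a⁻¹ * m + (a⁻¹ * m) ^ 2 := by
    have h0 : 0 ≤ a⁻¹ * m := by positivity
    have h1 : |a⁻¹ * m| ≤ 1 := by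
      rw [abs_of_nonneg h0, inv_mul_le_iff₀ ha]; linarith
    have := abs_le.1 (Real.abs_exp_sub_one_sub_id_le h1)
    linarith
  have h2 : m ^ 2 ≤ κ * m + c * m ^ p := by
    rcases le_or_gt m κ with h | h
    · have : 0 ≤ c * m ^ p := by positivity
      nlinarith
    · have mp : 0 < m := hκ.trans h
      have e : m ^ 2 = m ^ (2 - p) * m ^ p := by
        rw [← Real.rpow_add mp]; simp
      have : m ^ (2 - p) ≤ c := by
        rw [hc]
        have k1 : 0 < κ ^ (2 - p) := by positivity
        have k2 : 0 < a ^ (2 - p) := by positivity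
        rcases le_total p 2 with h2 | h2
        · have := Real.rpow_le_rpow m0 ma (by linarith : 0 ≤ 2 - p)
          linarith
        · have := Real.rpow_le_rpow_of_nonpos hκ h.le (by linarith : 2 - p ≤ 0)
          linarith
      have h3 : m ^ (2 - p) * m ^ p ≤ c * m ^ p := by gcongr
      have : 0 ≤ κ * m := by positivity
      linarith
  have h3 : m ^ p ≤ |x| ^ (2 * p) := by
    have e : |x| ^ (2 * p) = (x ^ 2) ^ p := by
      rw [Real.rpow_mul (abs_nonneg _)]; norm_num
    rw [e]; exact Real.rpow_le_rpow m0 mx (by linarith)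
  have h4 : a⁻¹ ^ 2 * m ^ 2 ≤ a⁻¹ ^ 2 * (κ * x ^ 2 + c * |x| ^ (2 * p)) := by
    apply mul_le_mul_of_nonneg_left _ (by positivity)
    have : κ * m ≤ κ * x ^ 2 := by gcongr
    have : c * m ^ p ≤ c * |x| ^ (2 * p) := by gcongr
    linarith
  have h5 : a⁻¹ * m ≤ a⁻¹ * x ^ 2 := by gcongr
  have e : a⁻¹ * (1 + a⁻¹ * κ) * x ^ 2 = a⁻¹ * x ^ 2 + a⁻¹ ^ 2 * (κ * x ^ 2) := by ring
  rw [e]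
  nlinarith

namespace MDiff
variable {Ω : Type} {mΩ : MeasurableSpace Ω} {μ : Measure Ω} [IsProbabilityMeasure μ]
  {ℱ : Filtration ℕ mΩ} {p : ℝ} {X q : ℕ → Ω → ℝ}

lemma expmart (h : MDiff μ ℱ p X q) (hp : 1 < p) (B : ℕ → Ω → ℝ) (mB : ∀ i, Measurable[ℱ i] (B i))
    (B0 : ∀ i ω, 0 ≤ B i ω) (iB : ∀ i, Integrable (B i) μ)
    (eB : ∀ i (W : Ω → ℝ), Measurable[ℱ i] W → (∃ c, ∀ ω, |W ω| ≤ c) →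
      ∫ ω, W ω * |X i ω| ^ (2 * p) ∂μ = ∫ ω, W ω * B i ω ∂μ)
    (a κ c : ℝ) (ha : 0 < a) (hκ : 0 < κ) (hc : c = κ ^ (2 - p) + a ^ (2 - p)) (k : ℕ) :
    Integrable (fun ω => Real.exp (∑ i ∈ range k, (a⁻¹ * trY a (X i ω)
      - (a⁻¹ * (1 + a⁻¹ * κ) * q i ω + a⁻¹ ^ 2 * c * B i ω)))) μ ∧
    ∫ ω, Real.exp (∑ i ∈ range k, (a⁻¹ * trY a (X i ω)
      - (a⁻¹ * (1 + a⁻¹ * κ) * q i ω + a⁻¹ ^ 2 * c * B i ω))) ∂μ ≤ 1 := by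
  have c0 : 0 < c := by rw [hc]; positivity
  have mt := trY_measurable a
  set d : ℕ → Ω → ℝ := fun i ω => a⁻¹ * (1 + a⁻¹ * κ) * q i ω + a⁻¹ ^ 2 * c * B i ω with hd
  have d0 : ∀ i ω, 0 ≤ d i ω := by
    intro i ω
    have := h.q0 i ω
    have := B0 i ω
    simp only [hd]; positivity
  have md : ∀ i, Measurable[ℱ i] (d i) := fun i =>
    ((h.mq i).const_mul _).add ((mB i).const_mul _)
  set L : ℕ → Ω → ℝ := fun k ω => ∑ i ∈ range k, (a⁻¹ * trY a (X i ω) - d i ω) with hL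
  have mL : ∀ k, Measurable[ℱ k] (L k) := by
    intro k
    apply Finset.measurable_fun_sum
    intro i hi
    have h1 : Measurable[ℱ k] (X i) := (h.mX i).mono (ℱ.mono (by simpa using hi)) le_rfl
    have h2 : Measurable[ℱ k] (d i) := (md i).mono (ℱ.mono (by have := mem_range.1 hi; omega)) le_rfl
    exact ((mt.comp h1).const_mul _).sub h2
  have Lk : ∀ k ω, L k ω ≤ k := by
    intro k ω
    simp only [hL]
    calc _ ≤ ∑ i ∈ range k, (1:ℝ) := by
          refine sum_le_sum fun i _ => ?_
          have h1 : a⁻¹ * trY a (X i ω) ≤ 1 := by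
            rw [inv_mul_le_iff₀ ha]; linarith [trY_le a (X i ω) ha.le]
          linarith [d0 i ω]
      _ = k := by simp
  have iE : ∀ k, Integrable (fun ω => Real.exp (L k ω)) μ := by
    intro k
    refine int_bdd ((mL k).mono (ℱ.le _) le_rfl).exp ⟨Real.exp k, fun ω => ?_⟩
    rw [abs_of_pos (Real.exp_pos _)]; exact Real.exp_le_exp.2 (Lk k ω)
  refine ⟨iE k, ?_⟩
  change ∫ ω, Real.exp (L k ω) ∂μ ≤ 1
  induction k with
  | zero => simp [hL]
  | succ k ih =>
    refine le_trans ?_ ih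
    set W : Ω → ℝ := fun ω => Real.exp (L k ω - d k ω) with hW
    have mW : Measurable[ℱ k] W := ((mL k).sub (md k)).exp
    have bW : ∃ c, ∀ ω, |W ω| ≤ c := by
      refine ⟨Real.exp k, fun ω => ?_⟩
      rw [abs_of_pos (Real.exp_pos _)]
      apply Real.exp_le_exp.2
      linarith [Lk k ω, d0 k ω]
    have mW' := mW.mono (ℱ.le _) le_rfl
    have i0 := int_bdd (μ := μ) mW' bW
    have i1 := int_bdd_mul (h.iX2 hp k) mW' bW
    have i2 := int_bdd_mul (h.iX k) mW' bW
    have j1 := int_bdd_mul (h.iq k) mW' bW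
    have j2 := int_bdd_mul (iB k) mW' bW
    have z1 := h.e2 k W mW bW
    have z2 := eB k W mW bW
    set α := a⁻¹ * (1 + a⁻¹ * κ)
    set β := a⁻¹ ^ 2 * c
    have s1 : ∫ ω, Real.exp (L (k + 1) ω) ∂μ ≤ ∫ ω, W ω + (α * (W ω * X k ω ^ 2) + β * (W ω * |X k ω| ^ (2 * p))) ∂μ := by
      refine integral_mono (iE (k + 1)) (i0.add ((i1.const_mul α).add (i2.const_mul β))) fun ω => ?_
      have e : L (k + 1) ω = (L k ω - d k ω) + a⁻¹ * trY a (X k ω) := by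
        simp only [hL]; rw [sum_range_succ]; ring
      dsimp only
      rw [e, Real.exp_add]
      have := exp_trY p a κ c (X k ω) hp ha hκ hc
      calc _ ≤ W ω * (1 + α * X k ω ^ 2 + β * |X k ω| ^ (2 * p)) :=
            mul_le_mul_of_nonneg_left this (Real.exp_pos _).le
        _ = _ := by ring
    have i12 : Integrable (fun ω => α * (W ω * X k ω ^ 2) + β * (W ω * |X k ω| ^ (2 * p))) μ :=
      (i1.const_mul α).add (i2.const_mul β)
    have j12 : Integrable (fun ω => α * (W ω * q k ω) + β * (W ω * B k ω)) μ :=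
      (j1.const_mul α).add (j2.const_mul β)
    have s2 : ∫ ω, W ω + (α * (W ω * X k ω ^ 2) + β * (W ω * |X k ω| ^ (2 * p))) ∂μ
       = ∫ ω, W ω + (α * (W ω * q k ω) + β * (W ω * B k ω)) ∂μ := by
      rw [integral_add i0 i12, integral_add (i1.const_mul α) (i2.const_mul β), integral_const_mul, integral_const_mul,
        integral_add i0 j12, integral_add (j1.const_mul α) (j2.const_mul β), integral_const_mul, integral_const_mul, z1, z2]
    rw [s2] at s1
    refine s1.trans (integral_mono (i0.add j12) (iE k) fun ω => ?_)
    have e : L k ω = (L k ω - d k ω) + d k ω := by ring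
    dsimp only
    rw [e, Real.exp_add]
    calc _ = W ω * (d k ω + 1) := by simp only [hd]; ring
      _ ≤ W ω * Real.exp (d k ω) := mul_le_mul_of_nonneg_left (Real.add_one_le_exp _) (Real.exp_pos _).le

end MDiff


lemma exp_neg_le (p ε : ℝ) (hp : 1 < p) (hε : 0 < ε) : Real.exp (-(ε ^ (-(1 / p)))) ≤ p ^ p * ε := by
  set L := ε ^ (-(1 / p)) with hL
  have L0 : 0 < L := by positivity
  have h1 : L / p ≤ Real.exp (L / p) := by linarith [Real.add_one_le_exp (L / p)]
  have h2 : (L / p) ^ p ≤ Real.exp L := by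
    calc (L / p) ^ p ≤ Real.exp (L / p) ^ p := Real.rpow_le_rpow (by positivity) h1 (by linarith)
      _ = Real.exp L := by rw [← Real.exp_mul]; congr 1; field_simp
  rw [Real.div_rpow L0.le (by linarith), div_le_iff₀ (by positivity)] at h2
  have h3 : L ^ p = ε⁻¹ := by
    rw [hL, ← Real.rpow_mul hε.le, ← Real.rpow_neg_one]; congr 1; field_simp
  rw [h3] at h2
  rw [Real.exp_neg]
  rw [inv_le_iff_one_le_mul₀ (Real.exp_pos _)]
  have := mul_le_mul_of_nonneg_right h2 hε.le
  rw [inv_mul_cancel₀ hε.ne'] at this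
  linarith

namespace MDiff
variable {Ω : Type} {mΩ : MeasurableSpace Ω} {μ : Measure Ω} [IsProbabilityMeasure μ]
  {ℱ : Filtration ℕ mΩ} {p : ℝ} {X q : ℕ → Ω → ℝ}

lemma qv (h : MDiff μ ℱ p X q) (hp : 1 < p) (B : ℕ → Ω → ℝ) (mB : ∀ i, Measurable[ℱ i] (B i))
    (B0 : ∀ i ω, 0 ≤ B i ω) (iB : ∀ i, Integrable (B i) μ)
    (eB : ∀ i (W : Ω → ℝ), Measurable[ℱ i] W → (∃ c, ∀ ω, |W ω| ≤ c) →
      ∫ ω, W ω * |X i ω| ^ (2 * p) ∂μ = ∫ ω, W ω * B i ω ∂μ)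
    (n : ℕ) (ε : ℝ) (hε : 0 < ε) (hε1 : ε ≤ 1)
    (iCV : Integrable (fun ω => |∑ j ∈ range n, q j ω - 1| ^ p) μ)
    (hN1 : ∑ i ∈ range n, ∫ ω, |X i ω| ^ (2 * p) ∂μ ≤ ε ^ (2 * p + 1))
    (hN2 : ∫ ω, |∑ j ∈ range n, q j ω - 1| ^ p ∂μ ≤ ε ^ (2 * p + 1)) :
    μ.real {ω | ¬ (∑ j ∈ range n, q j ω ≤ 1 + 5 * ε ∧ ∑ j ∈ range n, X j ω ^ 2 ≤ 1 + 5 * ε)} ≤ (4 + p ^ p) * ε := by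
  have hp0 : 0 < p := by linarith
  set a := ε ^ (1 + 1 / p) with ha
  have a0 : 0 < a := by positivity
  have aε : a ≤ ε := by
    calc a ≤ ε ^ (1:ℝ) := Real.rpow_le_rpow_of_exponent_ge hε hε1 (by have : 0 < 1 / p := by positivity
                                                                      linarith)
      _ = ε := Real.rpow_one ε
  set κ := a ^ 2 with hκ
  have κ0 : 0 < κ := by positivity
  set c := κ ^ (2 - p) + a ^ (2 - p) with hc
  have c0 : 0 < c := by positivity
  obtain ⟨iE, hE⟩ := h.expmart hp B mB B0 iB eB a κ c a0 κ0 hc n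
  have hle : ∀ s : ℝ, 1 ≤ s → ε ^ s ≤ ε := by
    intro s hs
    calc ε ^ s ≤ ε ^ (1:ℝ) := Real.rpow_le_rpow_of_exponent_ge hε hε1 hs
      _ = ε := Real.rpow_one ε
  -- bad events
  set Z : Ω → ℝ := fun ω => ∑ i ∈ range n, |X i ω| ^ (2 * p) with hZ
  have iZ : Integrable Z μ := integrable_finsetSum _ fun i _ => h.iX i
  have eZ : ∫ ω, Z ω ∂μ ≤ ε ^ (2 * p + 1) := by
    rw [hZ, integral_finsetSum _ fun i _ => h.iX i]; exact hN1
  have Z0 : ∀ ω, 0 ≤ Z ω := fun ω => sum_nonneg fun i _ => by positivity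
  have bad1 : μ.real {ω | a ^ p ≤ Z ω} ≤ ε := by
    have h1 := mul_meas_ge_le_integral_of_nonneg (μ := μ) (ae_of_all _ Z0) iZ (a ^ p)
    have h2 : a ^ p * μ.real {ω | a ^ p ≤ Z ω} ≤ a ^ p * ε ^ p := by
      refine h1.trans (eZ.trans (le_of_eq ?_))
      rw [ha, ← Real.rpow_mul hε.le, ← Real.rpow_add hε]; congr 1; field_simp; ring
    exact (le_of_mul_le_mul_left h2 (by positivity)).trans (hle p hp.le)
  have bad2 : μ.real {ω | ε ≤ |∑ j ∈ range n, q j ω - 1|} ≤ ε := by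
    refine (markov_bad p ε _ hε hp0 iCV hN2).trans ?_
    rw [← Real.rpow_sub hε]; exact hle _ (by linarith)
  set SB : Ω → ℝ := fun ω => ∑ i ∈ range n, B i ω with hSB
  have iSB : Integrable SB μ := integrable_finsetSum _ fun i _ => iB i
  have eSB : ∫ ω, SB ω ∂μ ≤ ε ^ (2 * p + 1) := by
    rw [hSB, integral_finsetSum _ fun i _ => iB i]
    refine le_trans (le_of_eq (sum_congr rfl fun i _ => ?_)) hN1
    have := eB i (fun _ => 1) measurable_const ⟨1, fun _ => by simp⟩
    simpa using this.symm
  have SB0 : ∀ ω, 0 ≤ SB ω := fun ω => sum_nonneg fun i _ => B0 i ω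
  have bad3 : μ.real {ω | ε * a / c ≤ SB ω} ≤ 2 * ε := by
    have h1 := mul_meas_ge_le_integral_of_nonneg (μ := μ) (ae_of_all _ SB0) iSB (ε * a / c)
    have h2 : ε ^ (2 * p + 1) ≤ ε * a / c * (2 * ε) := by
      rw [div_mul_eq_mul_div, le_div_iff₀ c0, hc, mul_add]
      have k1 : κ ^ (2 - p) = ε ^ (2 - 2 * p + 4 / p) := by
        rw [hκ, ha, ← Real.rpow_natCast, ← Real.rpow_mul hε.le, ← Real.rpow_mul hε.le]
        congr 1; push_cast; field_simp; ring
      have k2 : a ^ (2 - p) = ε ^ (1 - p + 2 / p) := by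
        rw [ha, ← Real.rpow_mul hε.le]
        congr 1; field_simp; ring
      have k3 : ε * a * (2 * ε) = 2 * ε ^ (3 + 1 / p) := by
        rw [show (3:ℝ) + 1 / p = (1 + 1 / p) + 2 by ring, Real.rpow_add hε, ha]
        norm_num; ring
      rw [k1, k2, k3, ← Real.rpow_add hε, ← Real.rpow_add hε]
      have l1 : ε ^ (2 * p + 1 + (2 - 2 * p + 4 / p)) ≤ ε ^ (3 + 1 / p) := by
        refine Real.rpow_le_rpow_of_exponent_ge hε hε1 ?_
        have : 0 < 1 / p := by positivity
        have e : 4 / p = 4 * (1 / p) := by ring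
        rw [e]; linarith
      have l2 : ε ^ (2 * p + 1 + (1 - p + 2 / p)) ≤ ε ^ (3 + 1 / p) := by
        refine Real.rpow_le_rpow_of_exponent_ge hε hε1 ?_
        have : 1 ≤ p + 1 / p := by have : 0 < 1 / p := by positivity
                                   linarith
        have e : 2 / p = 2 * (1 / p) := by ring
        rw [e]; linarith
      linarith
    exact le_of_mul_le_mul_left (h1.trans (eSB.trans h2)) (by positivity)
  set E : Ω → ℝ := fun ω => Real.exp (∑ i ∈ range n, (a⁻¹ * trY a (X i ω)
      - (a⁻¹ * (1 + a⁻¹ * κ) * q i ω + a⁻¹ ^ 2 * c * B i ω))) with hEd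
  have bad4 : μ.real {ω | Real.exp (ε ^ (-(1 / p))) ≤ E ω} ≤ p ^ p * ε := by
    have h1 := mul_meas_ge_le_integral_of_nonneg (μ := μ) (ae_of_all _ fun ω => (Real.exp_pos _).le) iE (Real.exp (ε ^ (-(1 / p))))
    refine le_trans ?_ (exp_neg_le p ε hp hε)
    rw [Real.exp_neg, ← one_div, le_div_iff₀ (Real.exp_pos _)]
    linarith
  have sub : {ω | ¬ (∑ j ∈ range n, q j ω ≤ 1 + 5 * ε ∧ ∑ j ∈ range n, X j ω ^ 2 ≤ 1 + 5 * ε)} ⊆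
      (({ω | a ^ p ≤ Z ω} ∪ {ω | ε ≤ |∑ j ∈ range n, q j ω - 1|}) ∪ {ω | ε * a / c ≤ SB ω}) ∪
        {ω | Real.exp (ε ^ (-(1 / p))) ≤ E ω} := by
    intro ω hω
    by_contra hno
    apply hω
    simp only [Set.mem_union, Set.mem_setOf_eq, not_or, not_le] at hno
    obtain ⟨⟨⟨g1, g2⟩, g3⟩, g4⟩ := hno
    have g2' := abs_lt.1 g2
    refine ⟨by linarith, ?_⟩
    have eY : ∀ j ∈ range n, X j ω ^ 2 = trY a (X j ω) := by
      intro j hj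
      unfold trY
      rw [if_pos]
      by_contra hgt
      push Not at hgt
      have h1 : a ^ p ≤ (X j ω ^ 2) ^ p := Real.rpow_le_rpow a0.le hgt.le hp0.le
      have e : |X j ω| ^ (2 * p) = (X j ω ^ 2) ^ p := by
        rw [Real.rpow_mul (abs_nonneg _)]; norm_num
      have h2 : |X j ω| ^ (2 * p) ≤ Z ω :=
        single_le_sum (f := fun j => |X j ω| ^ (2 * p)) (fun i _ => by positivity) hj
      linarith
    rw [sum_congr rfl eY]
    simp only [hEd] at g4
    have g5 := Real.exp_lt_exp.1 g4
    rw [sum_sub_distrib, sum_add_distrib, ← mul_sum, ← mul_sum, ← mul_sum] at g5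
    set Y := ∑ i ∈ range n, trY a (X i ω)
    set Q := ∑ i ∈ range n, q i ω
    have eB' : ∑ i ∈ range n, B i ω = SB ω := rfl
    rw [eB'] at g5
    have e1 : ε ^ (-(1 / p)) = a⁻¹ * ε := by
      rw [ha, ← Real.rpow_neg hε.le]
      nth_rewrite 3 [← Real.rpow_one ε]
      rw [← Real.rpow_add hε]; congr 1; ring
    have e2 : a⁻¹ * κ = a := by rw [hκ]; field_simp
    rw [e1, e2] at g5
    rw [lt_div_iff₀ c0] at g3
    have g6 : a⁻¹ ^ 2 * c * SB ω ≤ a⁻¹ * ε := by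
      have : a⁻¹ ^ 2 * (SB ω * c) ≤ a⁻¹ ^ 2 * (ε * a) := by gcongr
      have e : a⁻¹ ^ 2 * (ε * a) = a⁻¹ * ε := by field_simp
      linarith
    have g7 : a⁻¹ * Y < a⁻¹ * ((1 + a) * Q + 2 * ε) := by
      have e : a⁻¹ * ((1 + a) * Q + 2 * ε) = a⁻¹ * (1 + a) * Q + 2 * (a⁻¹ * ε) := by ring
      rw [e]; linarith
    have g8 : Y < (1 + a) * Q + 2 * ε := lt_of_mul_lt_mul_left g7 (by positivity)
    have Q1 : Q ≤ 1 + ε := by linarith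
    have g9 : (1 + a) * Q ≤ (1 + ε) * (1 + ε) :=
      (mul_le_mul_of_nonneg_left Q1 (by linarith)).trans (mul_le_mul_of_nonneg_right (by linarith) (by linarith))
    nlinarith
  have m1 := (measureReal_mono (μ := μ) sub).trans (measureReal_union_le _ _)
  have m2 := measureReal_union_le (μ := μ) ({ω | a ^ p ≤ Z ω} ∪ {ω | ε ≤ |∑ j ∈ range n, q j ω - 1|}) {ω | ε * a / c ≤ SB ω}
  have m3 := measureReal_union_le (μ := μ) {ω | a ^ p ≤ Z ω} {ω | ε ≤ |∑ j ∈ range n, q j ω - 1|}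
  linarith

end MDiff


lemma sum_Icc_one_eq (n : ℕ) (f : ℕ → ℝ) : ∑ i ∈ Icc 1 n, f i = ∑ i ∈ range n, f (i + 1) := by
  induction n with
  | zero => simp
  | succ k ih => rw [Finset.sum_Icc_succ_top (by omega), ih, Finset.sum_range_succ]

lemma condExp_pos_pull {Ω : Type} {mΩ : MeasurableSpace Ω} {μ : Measure Ω} [IsProbabilityMeasure μ]
    {m : MeasurableSpace Ω} (hm : m ≤ mΩ) {f W : Ω → ℝ} (hf : Integrable f μ) (f0 : ∀ ω, 0 ≤ f ω)
    (hW : Measurable[m] W) (hb : ∃ c, ∀ ω, |W ω| ≤ c) :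
    ∫ ω, W ω * f ω ∂μ = ∫ ω, W ω * max (μ[f | m] ω) 0 ∂μ := by
  have h0 : 0 ≤ᵐ[μ] μ[f | m] := condExp_nonneg (ae_of_all _ f0)
  have i1 : Integrable (W * f) μ := int_bdd_mul hf (hW.mono hm le_rfl) hb
  have h1 := condExp_mul_of_stronglyMeasurable_left (μ := μ) hW.stronglyMeasurable i1 hf
  calc ∫ ω, W ω * f ω ∂μ = ∫ ω, (μ[W * f | m]) ω ∂μ := (integral_condExp hm).symm
    _ = _ := by
      apply integral_congr_ae
      filter_upwards [h0, h1] with ω a b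
      have a' : 0 ≤ (μ[f | m]) ω := a
      rw [b, max_eq_left a']; rfl

lemma bridge {Ω : Type} {mΩ : MeasurableSpace Ω} {μ : Measure Ω} [IsProbabilityMeasure μ]
    {ℱ : Filtration ℕ mΩ} {p : ℝ} (hp : 1 < p) {Y : ℕ → Ω → ℝ}
    (mY : ∀ i, Measurable[ℱ (i + 1)] (Y i))
    (iY : ∀ i, Integrable (fun ω => |Y i ω| ^ (2 * p)) μ)
    (i1 : ∀ i, Integrable (Y i) μ)
    (eY : ∀ i, μ[Y i | ℱ i] =ᵐ[μ] 0) :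
    MDiff μ ℱ p Y (fun i ω => max ((μ[fun ω' => Y i ω' ^ 2 | ℱ i]) ω) 0) := by
  have mY' : ∀ i, Measurable (Y i) := fun i => (mY i).mono (ℱ.le _) le_rfl
  have i2 : ∀ i, Integrable (fun ω => Y i ω ^ 2) μ := by
    intro i
    refine ((integrable_const (1:ℝ)).add (iY i)).mono'
      ((mY' i).pow_const 2).aestronglyMeasurable ?_
    refine ae_of_all _ fun ω => ?_
    rw [Real.norm_eq_abs, abs_of_nonneg (sq_nonneg _)]
    exact MDiff.sq_le_rpow hp _
  refine ⟨mY, ?_, fun i ω => le_max_right _ _, iY, ?_, ?_, ?_⟩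
  · intro i
    exact stronglyMeasurable_condExp.measurable.max measurable_const
  · intro i
    exact integrable_condExp.pos_part
  · intro i W mW iW
    have h1 := condExp_mul_of_stronglyMeasurable_left (μ := μ) mW.stronglyMeasurable
      (show Integrable (W * Y i) μ from iW) (i1 i)
    calc ∫ ω, W ω * Y i ω ∂μ = ∫ ω, (μ[W * Y i | ℱ i]) ω ∂μ := (integral_condExp (ℱ.le i)).symm
      _ = ∫ ω, (0:ℝ) ∂μ := by
        apply integral_congr_ae
        filter_upwards [h1, eY i] with ω a b
        rw [a]; simp [b]
      _ = 0 := by simp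
  · intro i W mW bW
    exact condExp_pos_pull (ℱ.le i) (i2 i) (fun ω => sq_nonneg _) mW bW

lemma memLp_sq {Ω : Type} {mΩ : MeasurableSpace Ω} {μ : Measure Ω}
    {p : ℝ} (hp : 1 < p) {f : Ω → ℝ} (mf : Measurable f)
    (hf : Integrable (fun ω => |f ω| ^ (2 * p)) μ) :
    MemLp (fun ω => f ω ^ 2) (ENNReal.ofReal p) μ := by
  rw [← integrable_norm_rpow_iff (mf.pow_const 2).aestronglyMeasurable
    (by simpa using by linarith) ENNReal.ofReal_ne_top]
  refine hf.congr (ae_of_all _ fun ω => ?_)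
  simp only
  rw [ENNReal.toReal_ofReal (by linarith), Real.norm_eq_abs,
    abs_of_nonneg (sq_nonneg (f ω)), ← sq_abs (f ω), ← Real.rpow_natCast, ← Real.rpow_mul (abs_nonneg _)]
  norm_num

lemma final_core (p : ℝ) (hp : 1 < p) :
    ∃ C : ℝ, 0 < C ∧
      ∀ (Ω : Type) (mΩ : MeasurableSpace Ω) (μ : Measure Ω),
        IsProbabilityMeasure μ →
        ∀ (ℱ : Filtration ℕ mΩ) (n : ℕ) (Y : ℕ → Ω → ℝ),
        (∀ i, Measurable[ℱ (i + 1)] (Y i)) →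
        (∀ i, Integrable (fun ω => |Y i ω| ^ (2 * p)) μ) →
        (∀ i, Integrable (Y i) μ) →
        (∀ i, μ[Y i | ℱ i] =ᵐ[μ] 0) →
        ∀ CV : Ω → ℝ, (∀ ω, CV ω = ∑ i ∈ range n, (μ[fun ω' => Y i ω' ^ 2 | ℱ i]) ω) →
        ∀ ε : ℝ, 0 < ε → ε ≤ 1 →
        (∑ i ∈ range n, ∫ ω, |Y i ω| ^ (2 * p) ∂μ) + (∫ ω, |CV ω - 1| ^ p ∂μ) ≤ ε ^ (2 * p + 1) →
      ∀ t1 t2 : ℝ, 0 ≤ t1 → 0 ≤ t2 → t1 + t2 ≤ 1 →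
      ∀ x : ℝ, x ≤ 0 →
        stdNormalCDF x - C * ε ≤
        μ.real {ω | ∑ i ∈ range n, Y i ω ≤
          x * Real.sqrt (t1 * CV ω + t2 * (∑ i ∈ range n, Y i ω ^ 2) + (1 - t1 - t2))} := by
  obtain ⟨C, C0, hC⟩ := haeusler p hp
  have pp : 0 < p ^ p := by positivity
  refine ⟨C + 5 + (4 + p ^ p), by positivity, ?_⟩
  intro Ω mΩ μ hμ ℱ n Y mY iY i1 eY CV hCV ε hε hε1 hN t1 t2 h1 h2 h12 x hx
  have h := bridge hp mY iY i1 eY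
  set q : ℕ → Ω → ℝ := fun i ω => max ((μ[fun ω' => Y i ω' ^ 2 | ℱ i]) ω) 0 with hq
  have hqc : CV =ᵐ[μ] fun ω => ∑ i ∈ range n, q i ω := by
    have : ∀ᵐ ω ∂μ, ∀ i, 0 ≤ (μ[fun ω' => Y i ω' ^ 2 | ℱ i]) ω := by
      rw [ae_all_iff]
      intro i
      exact condExp_nonneg (ae_of_all _ fun ω => sq_nonneg _)
    filter_upwards [this] with ω hω
    rw [hCV]
    exact Finset.sum_congr rfl fun i _ => (max_eq_left (hω i)).symm
  have mY' : ∀ i, Measurable (Y i) := fun i => (mY i).mono (ℱ.le _) le_rfl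
  have hp1 : (1 : ENNReal) ≤ ENNReal.ofReal p := by
    rw [← ENNReal.ofReal_one]; exact ENNReal.ofReal_le_ofReal hp.le
  haveI : Fact ((1 : ENNReal) ≤ ENNReal.ofReal p) := ⟨hp1⟩
  have mCV : MemLp (fun ω => CV ω - 1) (ENNReal.ofReal p) μ := by
    have e : CV = fun ω => ∑ i ∈ range n, (μ[fun ω' => Y i ω' ^ 2 | ℱ i]) ω := funext hCV
    rw [e]
    refine MemLp.sub (memLp_finsetSum _ fun i _ => ?_) (memLp_const 1)
    exact (memLp_sq hp (mY' i) (iY i)).condExp hp1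
  have iCV0 : Integrable (fun ω => |CV ω - 1| ^ p) μ := by
    have := mCV.integrable_norm_rpow (by simpa using by linarith) ENNReal.ofReal_ne_top
    rwa [ENNReal.toReal_ofReal (by linarith)] at this
  have eCV : (fun ω => |CV ω - 1| ^ p) =ᵐ[μ] fun ω => |∑ j ∈ range n, q j ω - 1| ^ p := by
    filter_upwards [hqc] with ω hω
    rw [hω]
  have iCV : Integrable (fun ω => |∑ j ∈ range n, q j ω - 1| ^ p) μ := iCV0.congr eCV
  have nn1 : 0 ≤ ∑ i ∈ range n, ∫ ω, |Y i ω| ^ (2 * p) ∂μ :=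
    Finset.sum_nonneg fun i _ => integral_nonneg fun ω => by positivity
  have nn2 : 0 ≤ ∫ ω, |CV ω - 1| ^ p ∂μ := integral_nonneg fun ω => by positivity
  have hN1 : ∑ i ∈ range n, ∫ ω, |Y i ω| ^ (2 * p) ∂μ ≤ ε ^ (2 * p + 1) := by linarith
  have hN2 : ∫ ω, |∑ j ∈ range n, q j ω - 1| ^ p ∂μ ≤ ε ^ (2 * p + 1) := by
    rw [← integral_congr_ae eCV]; linarith
  have hH := hC Ω mΩ μ hμ ℱ Y q h n ε hε hε1 iCV hN1 hN2 ((1 + 5 * ε) * x)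
  have hQ := h.qv hp (fun i ω => max ((μ[fun ω' => |Y i ω'| ^ (2 * p) | ℱ i]) ω) 0)
    (fun i => stronglyMeasurable_condExp.measurable.max measurable_const)
    (fun i ω => le_max_right _ _) (fun i => integrable_condExp.pos_part)
    (fun i W mW bW => condExp_pos_pull (ℱ.le i) (iY i) (fun ω => by positivity) mW bW)
    n ε hε hε1 iCV hN1 hN2
  have hS := cdf_scale x (1 + 5 * ε) (by linarith)
  have hS' := (abs_le.mp hS).1
  set G := {ω | ∑ i ∈ range n, Y i ω ≤
          x * Real.sqrt (t1 * CV ω + t2 * (∑ i ∈ range n, Y i ω ^ 2) + (1 - t1 - t2))} with hG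
  set Bad := {ω | ¬ (∑ j ∈ range n, q j ω ≤ 1 + 5 * ε ∧ ∑ j ∈ range n, Y j ω ^ 2 ≤ 1 + 5 * ε)}
    with hBad
  have key : μ.real {ω | ∑ j ∈ range n, Y j ω ≤ (1 + 5 * ε) * x} ≤ μ.real (G ∪ Bad) := by
    refine ENNReal.toReal_mono (measure_ne_top _ _) (measure_mono_ae ?_)
    filter_upwards [hqc] with ω hω hle
    by_cases hb : ω ∈ Bad
    · exact Or.inr hb
    · left
      have hb' : ∑ j ∈ range n, q j ω ≤ 1 + 5 * ε ∧ ∑ j ∈ range n, Y j ω ^ 2 ≤ 1 + 5 * ε := by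
        by_contra hcon
        exact hb hcon
      have hle' : ∑ j ∈ range n, Y j ω ≤ (1 + 5 * ε) * x := hle
      change ∑ i ∈ range n, Y i ω ≤ _
      have hV : t1 * CV ω + t2 * (∑ i ∈ range n, Y i ω ^ 2) + (1 - t1 - t2) ≤ (1 + 5 * ε) ^ 2 := by
        have a1 := mul_le_mul_of_nonneg_left hb'.1 h1
        have a2 := mul_le_mul_of_nonneg_left hb'.2 h2
        have a3 : (1 - t1 - t2) * 1 ≤ (1 - t1 - t2) * (1 + 5 * ε) :=
          mul_le_mul_of_nonneg_left (by linarith) (by linarith)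
        rw [hω]
        nlinarith
      have := Real.sqrt_le_sqrt hV
      rw [Real.sqrt_sq (by linarith)] at this
      nlinarith
  have hu := measureReal_union_le (μ := μ) G Bad
  nlinarith


theorem stmt5 (p : ℝ) (hp : 1 < p) :
    ∃ C : ℝ, 0 < C ∧
      ∀ (Ω : Type) (mΩ : MeasurableSpace Ω) (μ : Measure Ω),
        IsProbabilityMeasure μ →
        ∀ (ℱ : Filtration ℕ mΩ), ℱ 0 = ⊥ →
        ∀ (n : ℕ) (X : ℕ → Ω → ℝ), X 0 = 0 →
        (∀ i, StronglyMeasurable[ℱ i] (X i)) →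
        (∀ i, Integrable (X i) μ) →
        (∀ i ∈ Finset.Icc 1 n, μ[X i | ℱ (i - 1)] =ᵐ[μ] (0 : Ω → ℝ)) →
        ∀ (S : ℕ → Ω → ℝ), (∀ k ω, S k ω = ∑ i ∈ Finset.Icc 1 k, X i ω) →
        ∀ (QV CV : Ω → ℝ),
          (∀ ω, QV ω = ∑ i ∈ Finset.Icc 1 n, (X i ω) ^ 2) →
          (∀ ω, CV ω = ∑ i ∈ Finset.Icc 1 n, (μ[fun ω' => (X i ω') ^ 2 | ℱ (i - 1)]) ω) →
        (∫ ω, (S n ω) ^ 2 ∂μ) = 1 →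
        (∀ i ∈ Finset.Icc 1 n, Integrable (fun ω => |X i ω| ^ (2 * p)) μ) →
        ∀ (N : ℝ),
          N = (∑ i ∈ Finset.Icc 1 n, ∫ ω, |X i ω| ^ (2 * p) ∂μ) + (∫ ω, |CV ω - 1| ^ p ∂μ) →
      N ≤ 1 →
      ∀ t1 t2 : ℝ, 0 ≤ t1 → 0 ≤ t2 → t1 ≤ 1 → t2 ≤ 1 → t1 + t2 ≤ 1 →
      ∀ x : ℝ, x ≤ 0 →
        (μ {ω | S n ω ≤ x * Real.sqrt (t1 * CV ω + t2 * QV ω + (1 - t1 - t2))}).toReal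
          - stdNormalCDF x ≥ -(C * N ^ (1 / (2 * p + 1))) := by
  obtain ⟨C, C0, hC⟩ := final_core p hp
  refine ⟨C, C0, ?_⟩
  intro Ω mΩ μ hμ ℱ _ n X _ mX iX eX S hS QV CV hQV hCV hS1 iXp N hN hN1 t1 t2 h1 h2 _ _ h12 x hx
  have p2 : (2 * p) ≠ 0 := by positivity
  set Y : ℕ → Ω → ℝ := fun i => if i < n then X (i + 1) else 0 with hY
  have Ylt : ∀ i, i < n → Y i = X (i + 1) := fun i hi => by simp [hY, hi]
  have Yge : ∀ i, ¬ i < n → Y i = 0 := fun i hi => by simp [hY, hi]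
  have mY : ∀ i, Measurable[ℱ (i + 1)] (Y i) := by
    intro i
    by_cases hi : i < n
    · rw [Ylt i hi]; exact (mX (i + 1)).measurable
    · rw [Yge i hi]; exact measurable_const
  have iY : ∀ i, Integrable (fun ω => |Y i ω| ^ (2 * p)) μ := by
    intro i
    by_cases hi : i < n
    · rw [Ylt i hi]; exact iXp (i + 1) (by simp; omega)
    · rw [Yge i hi]; simp [Real.zero_rpow p2]
  have i1 : ∀ i, Integrable (Y i) μ := by
    intro i
    by_cases hi : i < n
    · rw [Ylt i hi]; exact iX (i + 1)
    · rw [Yge i hi]; exact integrable_zero _ _ _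
  have eY : ∀ i, μ[Y i | ℱ i] =ᵐ[μ] 0 := by
    intro i
    by_cases hi : i < n
    · rw [Ylt i hi]; exact eX (i + 1) (by simp; omega)
    · rw [Yge i hi, condExp_zero]
  have eS : ∀ ω, S n ω = ∑ i ∈ range n, Y i ω := by
    intro ω
    rw [hS, sum_Icc_one_eq n (fun i => X i ω)]
    exact Finset.sum_congr rfl fun i hi => by rw [Ylt i (Finset.mem_range.mp hi)]
  have eQ : ∀ ω, QV ω = ∑ i ∈ range n, Y i ω ^ 2 := by
    intro ω
    rw [hQV, sum_Icc_one_eq n (fun i => X i ω ^ 2)]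
    exact Finset.sum_congr rfl fun i hi => by rw [Ylt i (Finset.mem_range.mp hi)]
  have eC : ∀ ω, CV ω = ∑ i ∈ range n, (μ[fun ω' => Y i ω' ^ 2 | ℱ i]) ω := by
    intro ω
    rw [hCV, sum_Icc_one_eq n (fun i => (μ[fun ω' => (X i ω') ^ 2 | ℱ (i - 1)]) ω)]
    refine Finset.sum_congr rfl fun i hi => ?_
    rw [Ylt i (Finset.mem_range.mp hi)]
    rfl
  have eN : N = (∑ i ∈ range n, ∫ ω, |Y i ω| ^ (2 * p) ∂μ) + (∫ ω, |CV ω - 1| ^ p ∂μ) := by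
    rw [hN, sum_Icc_one_eq n (fun i => ∫ ω, |X i ω| ^ (2 * p) ∂μ)]
    congr 1
    exact Finset.sum_congr rfl fun i hi => by rw [Ylt i (Finset.mem_range.mp hi)]
  have nnY : ∀ i, 0 ≤ ∫ ω, |Y i ω| ^ (2 * p) ∂μ := fun i => integral_nonneg fun ω => by positivity
  have nn1 : 0 ≤ ∑ i ∈ range n, ∫ ω, |Y i ω| ^ (2 * p) ∂μ := Finset.sum_nonneg fun i _ => nnY i
  have nn2 : 0 ≤ ∫ ω, |CV ω - 1| ^ p ∂μ := integral_nonneg fun ω => by positivity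
  have N0 : 0 < N := by
    rcases (show 0 ≤ N by linarith).lt_or_eq with h | h
    · exact h
    · exfalso
      have z : ∑ i ∈ range n, ∫ ω, |Y i ω| ^ (2 * p) ∂μ = 0 := by linarith
      rw [Finset.sum_eq_zero_iff_of_nonneg fun i _ => nnY i] at z
      have z2 : ∀ i, Y i =ᵐ[μ] 0 := by
        intro i
        by_cases hi : i < n
        · have := (integral_eq_zero_iff_of_nonneg (fun ω => by positivity) (iY i)).mp
            (z i (Finset.mem_range.mpr hi))
          filter_upwards [this] with ω hω
          have hω' : |Y i ω| ^ (2 * p) = 0 := hω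
          rw [Real.rpow_eq_zero (abs_nonneg _) p2] at hω'
          exact abs_eq_zero.mp hω'
        · rw [Yge i hi]
      have z3 : ∀ᵐ ω ∂μ, ∀ i, Y i ω = 0 := ae_all_iff.mpr z2
      have : ∫ ω, (S n ω) ^ 2 ∂μ = ∫ ω, (0:ℝ) ∂μ := by
        apply integral_congr_ae
        filter_upwards [z3] with ω hω
        rw [eS]
        simp [hω]
      rw [hS1] at this
      simp at this
  have e0 : 0 < N ^ (1 / (2 * p + 1)) := by positivity
  have e1 : N ^ (1 / (2 * p + 1)) ≤ 1 := Real.rpow_le_one N0.le hN1 (by positivity)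
  have e2 : (N ^ (1 / (2 * p + 1))) ^ (2 * p + 1) = N := by
    rw [← Real.rpow_mul N0.le, one_div_mul_cancel (by positivity), Real.rpow_one]
  have fin := hC Ω mΩ μ hμ ℱ n Y mY iY i1 eY CV eC _ e0 e1 (by rw [e2, ← eN]) t1 t2 h1 h2 h12 x hx
  have eG : {ω | S n ω ≤ x * Real.sqrt (t1 * CV ω + t2 * QV ω + (1 - t1 - t2))} =
      {ω | ∑ i ∈ range n, Y i ω ≤
          x * Real.sqrt (t1 * CV ω + t2 * (∑ i ∈ range n, Y i ω ^ 2) + (1 - t1 - t2))} := by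
    ext ω
    simp only [Set.mem_setOf_eq, eS, eQ]
  rw [eG]
  rw [measureReal_def] at fin
  linarith
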